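/- Let Γ be a 3-edge connected metric graph with canonical model (G₀, l₀), |V(G₀)| > 3, and let D ∈ W¹₃(Γ). If D_x and D_y are two consecutive admissible representatives of D, then there are exactly three distinct edges of the refinement G_D having one endpoint in Supp(D_x) and the other in Supp(D_y); these three edges form a 3-edge cut of G_D and all have the same length in (G_D, l_D). Moreover, for each point z ∈ Supp(D_x), the number of these cut edges incident to z equals the multiplicity D_x(z). -/

import Mathlib

open scoped Classical

/-!
Combinatorial models of metric graphs: a finite (multi-)graph together with a
positive length for each edge.  A metric graph is determined by such a model;
its canonical model is the (unique) model with all valences at least `3`.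
-/

structure MetricGraphModel : Type 1 where
  V : Type
  E : Type
  fV : Fintype V
  fE : Fintype E
  dV : DecidableEq V
  dE : DecidableEq E
  src : E → V
  tgt : E → V
  len : E → ℝ
  len_pos : ∀ e, 0 < len e

attribute [instance] MetricGraphModel.fV MetricGraphModel.fE
attribute [instance] MetricGraphModel.dV MetricGraphModel.dE

namespace MetricGraphModel

/-- An edge is incident to a vertex. -/
def Incident (Γ : MetricGraphModel) (e : Γ.E) (v : Γ.V) : Prop :=
  Γ.src e = v ∨ Γ.tgt e = v

/-- Incidence multiplicity (a loop counts twice). -/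
def incid (Γ : MetricGraphModel) (e : Γ.E) (v : Γ.V) : ℕ :=
  (if Γ.src e = v then 1 else 0) + (if Γ.tgt e = v then 1 else 0)

/-- The valence of a vertex. -/
def valence (Γ : MetricGraphModel) (v : Γ.V) : ℕ := ∑ e : Γ.E, Γ.incid e v

def dSrc (Γ : MetricGraphModel) (x : Γ.E × Bool) : Γ.V :=
  if x.2 then Γ.src x.1 else Γ.tgt x.1

def dTgt (Γ : MetricGraphModel) (x : Γ.E × Bool) : Γ.V :=
  if x.2 then Γ.tgt x.1 else Γ.src x.1

/-- Walks, given as lists of oriented edges. -/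
def IsWalk (Γ : MetricGraphModel) : List (Γ.E × Bool) → Γ.V → Γ.V → Prop
  | [], u, v => u = v
  | x :: xs, u, v => Γ.dSrc x = u ∧ IsWalk Γ xs (Γ.dTgt x) v

def Connected (Γ : MetricGraphModel) : Prop :=
  Nonempty Γ.V ∧ ∀ u v : Γ.V, ∃ L, IsWalk Γ L u v

/-- Removing any set of at most `2` edges leaves the graph connected. -/
def ThreeEdgeConnected (Γ : MetricGraphModel) : Prop :=
  ∀ S : Finset Γ.E, S.card ≤ 2 → ∀ u v : Γ.V,
    ∃ L, IsWalk Γ L u v ∧ ∀ x ∈ L, x.1 ∉ S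

def Loopless (Γ : MetricGraphModel) : Prop := ∀ e : Γ.E, Γ.src e ≠ Γ.tgt e

/-- A canonical model: connected, with all valences at least `3`. -/
def IsCanonical (Γ : MetricGraphModel) : Prop :=
  Γ.Connected ∧ ∀ v : Γ.V, 3 ≤ Γ.valence v

/-- A (model of a) metric tree. -/
def IsTreeModel (Γ : MetricGraphModel) : Prop :=
  Γ.Connected ∧ Fintype.card Γ.E + 1 = Fintype.card Γ.V

/-- Points of the associated metric graph: vertices together with interior
points of edges (parametrised by their distance from the source). -/
abbrev Pt (Γ : MetricGraphModel) : Type :=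
  Γ.V ⊕ Σ e : Γ.E, {t : ℝ // 0 < t ∧ t < Γ.len e}

end MetricGraphModel

open MetricGraphModel

/-- The (canonical) loopless model: insert a vertex at the midpoint of every loop. -/
noncomputable def looplessModel (Γ : MetricGraphModel) : MetricGraphModel where
  V := Γ.V ⊕ {e : Γ.E // Γ.src e = Γ.tgt e}
  E := {e : Γ.E // Γ.src e ≠ Γ.tgt e} ⊕ ({e : Γ.E // Γ.src e = Γ.tgt e} × Bool)
  fV := inferInstance
  fE := inferInstance
  dV := inferInstance
  dE := inferInstance
  src := fun x => match x with
    | Sum.inl e => Sum.inl (Γ.src e.1)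
    | Sum.inr p => Sum.inl (Γ.src p.1.1)
  tgt := fun x => match x with
    | Sum.inl e => Sum.inl (Γ.tgt e.1)
    | Sum.inr p => Sum.inr p.1
  len := fun x => match x with
    | Sum.inl e => Γ.len e.1
    | Sum.inr p => Γ.len p.1.1 / 2
  len_pos := by
    rintro (e | p)
    · exact Γ.len_pos e.1
    · have h := Γ.len_pos p.1.1
      show 0 < Γ.len p.1.1 / 2
      linarith

/-- The metric subgraph obtained by removing all loops. -/
noncomputable def deloop (Γ : MetricGraphModel) : MetricGraphModel where
  V := Γ.V
  E := {e : Γ.E // Γ.src e ≠ Γ.tgt e}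
  fV := inferInstance
  fE := inferInstance
  dV := inferInstance
  dE := inferInstance
  src := fun e => Γ.src e.1
  tgt := fun e => Γ.tgt e.1
  len := fun e => Γ.len e.1
  len_pos := fun e => Γ.len_pos e.1

namespace MetricGraphModel

/-! ### Divisors and rational functions -/

abbrev Divisor (Γ : MetricGraphModel) : Type := Γ.Pt → ℤ

noncomputable def divDegree {Γ : MetricGraphModel} (D : Divisor Γ) : ℤ := finsum D

def DivEffective {Γ : MetricGraphModel} (D : Divisor Γ) : Prop := ∀ p, 0 ≤ D p

def DivFinSupp {Γ : MetricGraphModel} (D : Divisor Γ) : Prop :=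
  (Function.support D).Finite

noncomputable def unitDiv (Γ : MetricGraphModel) (p : Γ.Pt) : Divisor Γ :=
  fun q => if q = p then 1 else 0

/-- `f` is continuous piecewise linear with integer slopes on `[0, L]`. -/
def PLInt (f : ℝ → ℝ) (L : ℝ) : Prop :=
  ∃ n : ℕ, ∃ t : Fin (n + 1) → ℝ, t 0 = 0 ∧ t (Fin.last n) = L ∧ StrictMono t ∧
    ∀ i : Fin n, ∃ m : ℤ, ∀ s ∈ Set.Icc (t i.castSucc) (t i.succ),
      f s = f (t i.castSucc) + (m : ℝ) * (s - t i.castSucc)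

/-- The (integer) outgoing slope of `f` to the right of `t0`. -/
noncomputable def slopeR (f : ℝ → ℝ) (t0 : ℝ) : ℤ :=
  if h : ∃ m : ℤ, ∃ ε : ℝ, 0 < ε ∧ ∀ s ∈ Set.Icc t0 (t0 + ε),
      f s = f t0 + (m : ℝ) * (s - t0)
  then h.choose else 0

/-- The (integer) outgoing slope of `f` to the left of `t0`. -/
noncomputable def slopeL (f : ℝ → ℝ) (t0 : ℝ) : ℤ :=
  if h : ∃ m : ℤ, ∃ ε : ℝ, 0 < ε ∧ ∀ s ∈ Set.Icc (t0 - ε) t0,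
      f s = f t0 + (m : ℝ) * (t0 - s)
  then h.choose else 0

/-- A rational function: continuous, piecewise linear with integer slopes. -/
structure RationalFunction (Γ : MetricGraphModel) where
  vVal : Γ.V → ℝ
  eFun : Γ.E → ℝ → ℝ
  pl : ∀ e, PLInt (eFun e) (Γ.len e)
  srcVal : ∀ e, eFun e 0 = vVal (Γ.src e)
  tgtVal : ∀ e, eFun e (Γ.len e) = vVal (Γ.tgt e)

/-- The principal divisor of a rational function: the sum of the outgoing
slopes at every point. -/
noncomputable def ratDiv {Γ : MetricGraphModel} (f : RationalFunction Γ) : Divisor Γ :=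
  fun p => match p with
  | Sum.inl v => ∑ e : Γ.E,
      ((if Γ.src e = v then slopeR (f.eFun e) 0 else 0) +
       (if Γ.tgt e = v then slopeL (f.eFun e) (Γ.len e) else 0))
  | Sum.inr q => slopeR (f.eFun q.1) q.2.1 + slopeL (f.eFun q.1) q.2.1

/-- Evaluation of a rational function at a point of the metric graph. -/
def ratEval {Γ : MetricGraphModel} (f : RationalFunction Γ) : Γ.Pt → ℝ
  | Sum.inl v => f.vVal v
  | Sum.inr q => f.eFun q.1 q.2.1

/-- Linear equivalence of divisors. -/
def LinEquiv (Γ : MetricGraphModel) (D D' : Divisor Γ) : Prop :=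
  ∃ f : RationalFunction Γ, ∀ p, D p = D' p + ratDiv f p

/-- The Baker–Norine rank of `D` is at least `k`. -/
def RankGE (Γ : MetricGraphModel) (D : Divisor Γ) (k : ℕ) : Prop :=
  ∀ A : Divisor Γ, DivEffective A → DivFinSupp A → divDegree A = (k : ℤ) →
    ∃ B : Divisor Γ, DivEffective B ∧ DivFinSupp B ∧
      LinEquiv Γ (fun p => D p - A p) B

/-- `W¹₃(Γ) ≠ ∅`: some divisor of degree `3` has rank at least `1`. -/
def DivisoriallyTrigonal (Γ : MetricGraphModel) : Prop :=
  ∃ D : Divisor Γ, DivFinSupp D ∧ divDegree D = 3 ∧ RankGE Γ D 1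

end MetricGraphModel

/-! ### Harmonic morphisms of metric graphs -/

/-- An indexed morphism of metric graph models.  An edge is either mapped onto
an edge (with an integer stretching index `mu`) or contracted to a vertex. -/
structure MGMorphism (Γ Δ : MetricGraphModel) where
  vMap : Γ.V → Δ.V
  eMap : Γ.E → Δ.E ⊕ Δ.V
  mu : Γ.E → ℕ
  mu_zero : ∀ e, mu e = 0 ↔ ∃ v', eMap e = Sum.inr v'
  contract_ok : ∀ e v', eMap e = Sum.inr v' →
    vMap (Γ.src e) = v' ∧ vMap (Γ.tgt e) = v'
  edge_ok : ∀ e e', eMap e = Sum.inl e' →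
    ((vMap (Γ.src e) = Δ.src e' ∧ vMap (Γ.tgt e) = Δ.tgt e') ∨
     (vMap (Γ.src e) = Δ.tgt e' ∧ vMap (Γ.tgt e) = Δ.src e'))
  len_ok : ∀ e e', eMap e = Sum.inl e' → (mu e : ℝ) * Γ.len e = Δ.len e'

namespace MGMorphism

variable {Γ Δ : MetricGraphModel}

/-- The local sum `m_φ(v)` computed along a fixed edge `e'` at `φ(v)`. -/
noncomputable def locDeg (φ : MGMorphism Γ Δ) (v : Γ.V) (e' : Δ.E) : ℕ :=
  ∑ e : Γ.E, if φ.eMap e = Sum.inl e' then φ.mu e * Γ.incid e v else 0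

def Harmonic (φ : MGMorphism Γ Δ) : Prop :=
  ∀ (v : Γ.V) (e₁ e₂ : Δ.E),
    Δ.Incident e₁ (φ.vMap v) → Δ.Incident e₂ (φ.vMap v) →
      locDeg φ v e₁ = locDeg φ v e₂

def Nondegenerate (φ : MGMorphism Γ Δ) : Prop :=
  ∀ v : Γ.V, ∃ e' : Δ.E, Δ.Incident e' (φ.vMap v) ∧ 1 ≤ locDeg φ v e'

def HasDegree (φ : MGMorphism Γ Δ) (d : ℕ) : Prop :=
  ∀ e' : Δ.E, (∑ e : Γ.E, if φ.eMap e = Sum.inl e' then φ.mu e else 0) = d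

/-- The horizontal multiplicity `m_φ(v)` at a vertex. -/
noncomputable def mVal (φ : MGMorphism Γ Δ) (v : Γ.V) : ℕ :=
  (Finset.univ.filter fun e' : Δ.E => Δ.Incident e' (φ.vMap v)).sup (locDeg φ v)

end MGMorphism

/-! ### Isomorphisms, subdivisions and tropical modifications -/

def sameEndsMap (Γ Δ : MetricGraphModel) (f : Γ.V → Δ.V) (e : Γ.E) (e' : Δ.E) : Prop :=
  (f (Γ.src e) = Δ.src e' ∧ f (Γ.tgt e) = Δ.tgt e') ∨
  (f (Γ.src e) = Δ.tgt e' ∧ f (Γ.tgt e) = Δ.src e')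

structure MGMIso (Γ Δ : MetricGraphModel) where
  vEquiv : Γ.V ≃ Δ.V
  eEquiv : Γ.E ≃ Δ.E
  ends : ∀ e, sameEndsMap Γ Δ (fun v => vEquiv v) e (eEquiv e)
  len_eq : ∀ e, Δ.len (eEquiv e) = Γ.len e

/-- Deletion of a leaf (a valence-one vertex together with its edge). -/
def LeafDeletion (Δ Δ' : MetricGraphModel) : Prop :=
  ∃ (v₀ : Δ.V) (e₀ : Δ.E), Δ.valence v₀ = 1 ∧ Δ.Incident e₀ v₀ ∧
    ∃ (fv : Δ'.V ≃ {v : Δ.V // v ≠ v₀}) (fe : Δ'.E ≃ {e : Δ.E // e ≠ e₀}),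
      (∀ e : Δ'.E, sameEndsMap Δ' Δ (fun v => (fv v).1) e (fe e).1) ∧
      ∀ e : Δ'.E, Δ.len (fe e).1 = Δ'.len e

/-- Suppression of a valence-two vertex, merging its two edges and adding
their lengths. -/
def SeriesReduction (Δ Δ' : MetricGraphModel) : Prop :=
  ∃ (v₀ : Δ.V) (e₁ e₂ : Δ.E) (u₁ u₂ : Δ.V),
    e₁ ≠ e₂ ∧ Δ.valence v₀ = 2 ∧ u₁ ≠ v₀ ∧ u₂ ≠ v₀ ∧
    ({Δ.src e₁, Δ.tgt e₁} : Set Δ.V) = {v₀, u₁} ∧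
    ({Δ.src e₂, Δ.tgt e₂} : Set Δ.V) = {v₀, u₂} ∧
    ∃ (fv : Δ'.V ≃ {v : Δ.V // v ≠ v₀}) (ebar : Δ'.E)
      (fe : {e : Δ'.E // e ≠ ebar} ≃ {e : Δ.E // e ≠ e₁ ∧ e ≠ e₂}),
      Δ'.len ebar = Δ.len e₁ + Δ.len e₂ ∧
      ({(fv (Δ'.src ebar)).1, (fv (Δ'.tgt ebar)).1} : Set Δ.V) = {u₁, u₂} ∧
      (∀ e : {e : Δ'.E // e ≠ ebar},
        sameEndsMap Δ' Δ (fun v => (fv v).1) e.1 (fe e).1) ∧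
      ∀ e : {e : Δ'.E // e ≠ ebar}, Δ.len (fe e).1 = Δ'.len e.1

def ReductionStep (Δ Δ' : MetricGraphModel) : Prop :=
  LeafDeletion Δ Δ' ∨ SeriesReduction Δ Δ' ∨ Nonempty (MGMIso Δ Δ')

/-- `Δ` reduces to `Γ` by deleting leaves and suppressing valence-two
vertices.  When `Γ` is a canonical model, this says exactly that the metric
graph of `Δ` is a tropical modification of the metric graph of `Γ`. -/
def Reduces (Δ Γ : MetricGraphModel) : Prop :=
  Relation.ReflTransGen ReductionStep Δ Γ

def IsTropicalModificationOf (Δ Γ : MetricGraphModel) : Prop := Reduces Δ Γ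

def ModelStep (Δ Δ' : MetricGraphModel) : Prop :=
  SeriesReduction Δ Δ' ∨ Nonempty (MGMIso Δ Δ')

/-- `Δ` and `Γ` are models of the same metric graph (no trees added). -/
def SameMetricGraph (Δ Γ : MetricGraphModel) : Prop :=
  Relation.ReflTransGen ModelStep Δ Γ

/-- `Γ` is trigonal: a tropical modification of `Γ` admits a non-degenerate
harmonic morphism of degree `3` onto a metric tree. -/
def Trigonal (Γ : MetricGraphModel) : Prop :=
  ∃ Δ T : MetricGraphModel, IsTropicalModificationOf Δ Γ ∧ T.IsTreeModel ∧
    ∃ φ : MGMorphism Δ T,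
      MGMorphism.Harmonic φ ∧ MGMorphism.Nondegenerate φ ∧ MGMorphism.HasDegree φ 3

/-- `Γ` is strictly trigonal: `Γ` itself (i.e. some model of the same metric
graph) admits a non-degenerate harmonic morphism of degree `3` onto a metric
tree. -/
def StrictlyTrigonal (Γ : MetricGraphModel) : Prop :=
  ∃ Δ T : MetricGraphModel, SameMetricGraph Δ Γ ∧ T.IsTreeModel ∧
    ∃ φ : MGMorphism Δ T,
      MGMorphism.Harmonic φ ∧ MGMorphism.Nondegenerate φ ∧ MGMorphism.HasDegree φ 3

/-! ### Embeddings up to subdivision (for tropical modifications of morphisms) -/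

structure SubEmbed (G Δ : MetricGraphModel) where
  v : G.V → Δ.V
  inj : Function.Injective v
  path : G.E → List (Δ.E × Bool)
  ne : ∀ e, path e ≠ []
  walk : ∀ e, MetricGraphModel.IsWalk Δ (path e) (v (G.src e)) (v (G.tgt e))
  len_sum : ∀ e, ((path e).map fun x => Δ.len x.1).sum = G.len e

/-! ### Pullback of points along a harmonic morphism -/

/-- `φ` maps the point `p` of `Γ` to the point `t` of `Δ`. -/
def MapsToPt {Γ Δ : MetricGraphModel} (φ : MGMorphism Γ Δ) : Γ.Pt → Δ.Pt → Prop
  | Sum.inl v, Sum.inl t => φ.vMap v = t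
  | Sum.inl _, Sum.inr _ => False
  | Sum.inr q, Sum.inl t => φ.eMap q.1 = Sum.inr t
  | Sum.inr q, Sum.inr r =>
      φ.eMap q.1 = Sum.inl r.1 ∧
      ((φ.vMap (Γ.src q.1) = Δ.src r.1 ∧ (r.2.1 : ℝ) = (φ.mu q.1 : ℝ) * (q.2.1 : ℝ)) ∨
       (φ.vMap (Γ.src q.1) = Δ.tgt r.1 ∧
         (r.2.1 : ℝ) = Δ.len r.1 - (φ.mu q.1 : ℝ) * (q.2.1 : ℝ)))

/-- Horizontal multiplicity of a point. -/
noncomputable def hmult {Γ Δ : MetricGraphModel} (φ : MGMorphism Γ Δ) : Γ.Pt → ℕ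
  | Sum.inl v => MGMorphism.mVal φ v
  | Sum.inr q => φ.mu q.1

/-- The pullback divisor `φ*(t)` of a point `t`. -/
noncomputable def pullbackDiv {Γ Δ : MetricGraphModel} (φ : MGMorphism Γ Δ)
    (t : Δ.Pt) : MetricGraphModel.Divisor Γ :=
  fun p => if MapsToPt φ p t then (hmult φ p : ℤ) else 0

/-! ### Points on edges, admissible representatives, consecutive divisors -/

open MetricGraphModel

/-- `p` is an interior point of the edge `e`. -/
def interiorOf (Γ : MetricGraphModel) (e : Γ.E) (p : Γ.Pt) : Prop :=
  ∃ q : {t : ℝ // 0 < t ∧ t < Γ.len e}, p = Sum.inr ⟨e, q⟩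

def SameEdgeInterior (Γ : MetricGraphModel) (p q : Γ.Pt) : Prop :=
  ∃ e : Γ.E, interiorOf Γ e p ∧ interiorOf Γ e q

/-- `Dx` is the admissible representative of `D` with respect to the vertex
`x`: it is linearly equivalent to `D`, of the form `x + x₁ + x₂`, and `x₁, x₂`
do not both lie in the interior of one edge. -/
def AdmissibleRep (Γ : MetricGraphModel) (D : Divisor Γ) (x : Γ.V)
    (Dx : Divisor Γ) : Prop :=
  LinEquiv Γ D Dx ∧
  ∃ p q : Γ.Pt,
    Dx = (fun z => unitDiv Γ (Sum.inl x) z + unitDiv Γ p z + unitDiv Γ q z) ∧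
    ¬ SameEdgeInterior Γ p q

/-- `p` lies on the (closed) edge `e` at distance `s` from its source. -/
def LiesOn (Γ : MetricGraphModel) (e : Γ.E) (p : Γ.Pt) (s : ℝ) : Prop :=
  (p = Sum.inl (Γ.src e) ∧ s = 0) ∨ (p = Sum.inl (Γ.tgt e) ∧ s = Γ.len e) ∨
  (∃ h : 0 < s ∧ s < Γ.len e, p = Sum.inr ⟨e, ⟨s, h⟩⟩)

/-- Vertices of the refinement `G_D`: vertices of `G₀` together with all
support points of admissible representatives of `D`. -/
def SpecialPt (Γ : MetricGraphModel) (D : Divisor Γ) (p : Γ.Pt) : Prop :=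
  (∃ v : Γ.V, p = Sum.inl v) ∨
  ∃ (x : Γ.V) (Dx : Divisor Γ), AdmissibleRep Γ D x Dx ∧ Dx p ≠ 0

/-- An edge of the refinement `G_D` joining the supports of `Dx` and `Dy`:
a segment of an edge of `Γ` between a point of `Supp Dx` and a point of
`Supp Dy` containing no vertex of `G_D` in its interior. -/
def ConnSeg (Γ : MetricGraphModel) (D Dx Dy : Divisor Γ) (e : Γ.E) (s t : ℝ) : Prop :=
  s < t ∧ ∃ p q : Γ.Pt, LiesOn Γ e p s ∧ LiesOn Γ e q t ∧
    ((Dx p ≠ 0 ∧ Dy q ≠ 0) ∨ (Dy p ≠ 0 ∧ Dx q ≠ 0)) ∧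
    ∀ r, s < r → r < t → ∀ z, LiesOn Γ e z r → ¬ SpecialPt Γ D z

/-- Two admissible representatives are consecutive. -/
def Consecutive (Γ : MetricGraphModel) (D Dx Dy : Divisor Γ) : Prop :=
  Dx ≠ Dy ∧ ∃ e s t, ConnSeg Γ D Dx Dy e s t

/-- The open segment of `e` between parameters `s` and `t`, as a set of points. -/
def segSet (Γ : MetricGraphModel) (e : Γ.E) (s t : ℝ) : Set Γ.Pt :=
  {z | ∃ r, s < r ∧ r < t ∧ LiesOn Γ e z r}

/-- Two points can be joined inside one edge avoiding the removed set `R`. -/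
def AvoidAdj (Γ : MetricGraphModel) (R : Set Γ.Pt) (p q : Γ.Pt) : Prop :=
  ∃ (e : Γ.E) (s t : ℝ), s ≤ t ∧
    ((LiesOn Γ e p s ∧ LiesOn Γ e q t) ∨ (LiesOn Γ e q s ∧ LiesOn Γ e p t)) ∧
    ∀ r, s < r → r < t → ∀ z, LiesOn Γ e z r → z ∉ R

/-- The complement of `R` in the metric graph is connected. -/
def ComplementConnected (Γ : MetricGraphModel) (R : Set Γ.Pt) : Prop :=
  ∀ p q : Γ.Pt, p ∉ R → q ∉ R →
    Relation.ReflTransGen (fun a b => a ∉ R ∧ b ∉ R ∧ AvoidAdj Γ R a b) p q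

/-! ### Minimizing/maximizing sets of a rational function -/

def minSet {Γ : MetricGraphModel} (f : RationalFunction Γ) : Set Γ.Pt :=
  {p | ∀ q, ratEval f p ≤ ratEval f q}

def maxSet {Γ : MetricGraphModel} (f : RationalFunction Γ) : Set Γ.Pt :=
  {p | ∀ q, ratEval f q ≤ ratEval f p}

/-- `p` is a boundary point of `A`: it belongs to `A` and there are points of
the complement arbitrarily close to it along some edge. -/
def InBoundary (Γ : MetricGraphModel) (A : Set Γ.Pt) (p : Γ.Pt) : Prop :=
  p ∈ A ∧ ∃ (e : Γ.E) (s : ℝ), LiesOn Γ e p s ∧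
    ∀ ε : ℝ, 0 < ε → ∃ r z, |r - s| < ε ∧ LiesOn Γ e z r ∧ z ∉ A

/-- There is an edge leaving `A` at `p`, in the direction of `e` at parameter
`s` (increasing if `b = true`, decreasing if `b = false`). -/
def ExitsAt (Γ : MetricGraphModel) (A : Set Γ.Pt) (p : Γ.Pt) (e : Γ.E)
    (s : ℝ) (b : Bool) : Prop :=
  LiesOn Γ e p s ∧
  (b = true → ∃ ε : ℝ, 0 < ε ∧ s + ε ≤ Γ.len e ∧
    ∀ r, s < r → r < s + ε → ∀ z, LiesOn Γ e z r → z ∉ A) ∧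
  (b = false → ∃ ε : ℝ, 0 < ε ∧ 0 ≤ s - ε ∧
    ∀ r, s - ε < r → r < s → ∀ z, LiesOn Γ e z r → z ∉ A)


section
open scoped Classical
open MetricGraphModel

namespace TriCut

/-! ### Local piecewise linear theory -/

def HasR (φ : ℝ → ℝ) (t : ℝ) (m : ℤ) : Prop :=
  ∃ ε : ℝ, 0 < ε ∧ ∀ s ∈ Set.Icc t (t + ε), φ s = φ t + (m : ℝ) * (s - t)

def HasL (φ : ℝ → ℝ) (t : ℝ) (m : ℤ) : Prop :=
  ∃ ε : ℝ, 0 < ε ∧ ∀ s ∈ Set.Icc (t - ε) t, φ s = φ t + (m : ℝ) * (t - s)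

lemma HasR.unique {φ : ℝ → ℝ} {t : ℝ} {m n : ℤ} (h : HasR φ t m) (h' : HasR φ t n) : m = n := by
  obtain ⟨ε, hε, h⟩ := h
  obtain ⟨δ, hδ, h'⟩ := h'
  have hm : 0 < min ε δ := lt_min hε hδ
  have h1 := h (t + min ε δ) ⟨by linarith, by linarith [min_le_left ε δ]⟩
  have h2 := h' (t + min ε δ) ⟨by linarith, by linarith [min_le_right ε δ]⟩
  have h3 : ((m : ℝ) - n) * min ε δ = 0 := by
    have : t + min ε δ - t = min ε δ := by ring
    rw [this] at h1 h2
    linarith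
  rcases mul_eq_zero.1 h3 with h | h
  · exact_mod_cast sub_eq_zero.1 h
  · exact absurd h hm.ne'

lemma HasL.unique {φ : ℝ → ℝ} {t : ℝ} {m n : ℤ} (h : HasL φ t m) (h' : HasL φ t n) : m = n := by
  obtain ⟨ε, hε, h⟩ := h
  obtain ⟨δ, hδ, h'⟩ := h'
  have hm : 0 < min ε δ := lt_min hε hδ
  have h1 := h (t - min ε δ) ⟨by linarith [min_le_left ε δ], by linarith⟩
  have h2 := h' (t - min ε δ) ⟨by linarith [min_le_right ε δ], by linarith⟩
  have h3 : ((m : ℝ) - n) * min ε δ = 0 := by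
    have : t - (t - min ε δ) = min ε δ := by ring
    rw [this] at h1 h2
    linarith
  rcases mul_eq_zero.1 h3 with h | h
  · exact_mod_cast sub_eq_zero.1 h
  · exact absurd h hm.ne'

lemma HasR.slope {φ : ℝ → ℝ} {t : ℝ} {m : ℤ} (h : HasR φ t m) : slopeR φ t = m := by
  have hex : ∃ m : ℤ, ∃ ε : ℝ, 0 < ε ∧ ∀ s ∈ Set.Icc t (t + ε),
      φ s = φ t + (m : ℝ) * (s - t) := ⟨m, h⟩
  unfold slopeR
  rw [dif_pos hex]
  exact HasR.unique hex.choose_spec h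

lemma HasL.slope {φ : ℝ → ℝ} {t : ℝ} {m : ℤ} (h : HasL φ t m) : slopeL φ t = m := by
  have hex : ∃ m : ℤ, ∃ ε : ℝ, 0 < ε ∧ ∀ s ∈ Set.Icc (t - ε) t,
      φ s = φ t + (m : ℝ) * (t - s) := ⟨m, h⟩
  unfold slopeL
  rw [dif_pos hex]
  exact HasL.unique hex.choose_spec h

lemma HasR.add {φ ψ : ℝ → ℝ} {t : ℝ} {m n : ℤ} (h : HasR φ t m) (h' : HasR ψ t n) :
    HasR (fun s => φ s + ψ s) t (m + n) := by
  obtain ⟨ε, hε, h⟩ := h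
  obtain ⟨δ, hδ, h'⟩ := h'
  refine ⟨min ε δ, lt_min hε hδ, fun s hs => ?_⟩
  have h1 := h s ⟨hs.1, by linarith [hs.2, min_le_left ε δ]⟩
  have h2 := h' s ⟨hs.1, by linarith [hs.2, min_le_right ε δ]⟩
  simp only [h1, h2]
  push_cast
  ring

lemma HasL.add {φ ψ : ℝ → ℝ} {t : ℝ} {m n : ℤ} (h : HasL φ t m) (h' : HasL ψ t n) :
    HasL (fun s => φ s + ψ s) t (m + n) := by
  obtain ⟨ε, hε, h⟩ := h
  obtain ⟨δ, hδ, h'⟩ := h'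
  refine ⟨min ε δ, lt_min hε hδ, fun s hs => ?_⟩
  have h1 := h s ⟨by linarith [hs.1, min_le_left ε δ], hs.2⟩
  have h2 := h' s ⟨by linarith [hs.1, min_le_right ε δ], hs.2⟩
  simp only [h1, h2]
  push_cast
  ring

lemma HasR.mul {φ : ℝ → ℝ} {t : ℝ} {m : ℤ} (h : HasR φ t m) (k : ℤ) :
    HasR (fun s => (k : ℝ) * φ s) t (k * m) := by
  obtain ⟨ε, hε, h⟩ := h
  refine ⟨ε, hε, fun s hs => ?_⟩
  simp only [h s hs]
  push_cast
  ring

lemma HasL.mul {φ : ℝ → ℝ} {t : ℝ} {m : ℤ} (h : HasL φ t m) (k : ℤ) :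
    HasL (fun s => (k : ℝ) * φ s) t (k * m) := by
  obtain ⟨ε, hε, h⟩ := h
  refine ⟨ε, hε, fun s hs => ?_⟩
  simp only [h s hs]
  push_cast
  ring

lemma HasR.congr {φ ψ : ℝ → ℝ} {t u : ℝ} {m : ℤ} (h : HasR φ t m) (hu : t < u)
    (hc : ∀ s ∈ Set.Icc t u, ψ s = φ s) : HasR ψ t m := by
  obtain ⟨ε, hε, h⟩ := h
  refine ⟨min ε (u - t), lt_min hε (by linarith), fun s hs => ?_⟩
  rw [hc s ⟨hs.1, by linarith [hs.2, min_le_right ε (u - t)]⟩, hc t ⟨le_refl _, hu.le⟩]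
  exact h s ⟨hs.1, by linarith [hs.2, min_le_left ε (u - t)]⟩

lemma HasL.congr {φ ψ : ℝ → ℝ} {t u : ℝ} {m : ℤ} (h : HasL φ t m) (hu : u < t)
    (hc : ∀ s ∈ Set.Icc u t, ψ s = φ s) : HasL ψ t m := by
  obtain ⟨ε, hε, h⟩ := h
  refine ⟨min ε (t - u), lt_min hε (by linarith), fun s hs => ?_⟩
  rw [hc s ⟨by linarith [hs.1, min_le_right ε (t - u)], hs.2⟩, hc t ⟨hu.le, le_refl _⟩]
  exact h s ⟨by linarith [hs.1, min_le_left ε (t - u)], hs.2⟩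

lemma hasR_max (p t : ℝ) : HasR (fun s => max 0 (s - p)) t (if p ≤ t then 1 else 0) := by
  by_cases h : p ≤ t
  · rw [if_pos h]
    refine ⟨1, one_pos, fun s hs => ?_⟩
    simp only
    rw [max_eq_right (by linarith [hs.1]), max_eq_right (by linarith)]
    push_cast
    ring
  · rw [if_neg h]
    push Not at h
    refine ⟨p - t, by linarith, fun s hs => ?_⟩
    simp only
    rw [max_eq_left (by linarith [hs.2]), max_eq_left (by linarith)]
    simp

lemma hasL_max (p t : ℝ) : HasL (fun s => max 0 (s - p)) t (if p < t then -1 else 0) := by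
  by_cases h : p < t
  · rw [if_pos h]
    refine ⟨t - p, by linarith, fun s hs => ?_⟩
    simp only
    rw [max_eq_right (by linarith [hs.1]), max_eq_right (by linarith)]
    push_cast
    ring
  · rw [if_neg h]
    push Not at h
    refine ⟨1, one_pos, fun s hs => ?_⟩
    simp only
    rw [max_eq_left (by linarith [hs.2]), max_eq_left (by linarith)]
    simp

lemma hasR_id (t : ℝ) : HasR (fun s => s) t 1 :=
  ⟨1, one_pos, fun s _ => by push_cast; ring⟩

lemma hasL_id (t : ℝ) : HasL (fun s => s) t (-1) :=
  ⟨1, one_pos, fun s _ => by push_cast; ring⟩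

lemma hasR_const (c t : ℝ) : HasR (fun _ => c) t 0 := ⟨1, one_pos, fun s _ => by simp⟩

lemma hasL_const (c t : ℝ) : HasL (fun _ => c) t 0 := ⟨1, one_pos, fun s _ => by simp⟩

/-- Local piecewise linearity with integer slopes. -/
def LocPL (φ : ℝ → ℝ) (L : ℝ) : Prop :=
  (∀ t, 0 ≤ t → t < L → ∃ m, HasR φ t m) ∧ (∀ t, 0 < t → t ≤ L → ∃ m, HasL φ t m)

lemma real_ind {L : ℝ} (hL : 0 ≤ L) (P : ℝ → Prop) (h0 : P 0)
    (hR : ∀ t, 0 ≤ t → t < L → P t → ∃ ε > 0, ∀ t', t < t' → t' ≤ t + ε → t' ≤ L → P t')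
    (hl : ∀ t, 0 < t → t ≤ L → ∃ ε > 0, ∀ t', t - ε ≤ t' → 0 ≤ t' → t' < t → P t' → P t) :
    P L := by
  let A : Set ℝ := {t | 0 ≤ t ∧ t ≤ L ∧ P t}
  have hA0 : (0 : ℝ) ∈ A := ⟨le_refl _, hL, h0⟩
  have hbdd : BddAbove A := ⟨L, fun t ht => ht.2.1⟩
  have hc0 : 0 ≤ sSup A := le_csSup hbdd hA0
  have hcL : sSup A ≤ L := csSup_le ⟨0, hA0⟩ (fun t ht => ht.2.1)
  have hPc : P (sSup A) := by
    rcases hc0.eq_or_lt with h | h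
    · rw [← h]; exact h0
    · obtain ⟨ε, hε, hh⟩ := hl _ h hcL
      obtain ⟨a, ha, hac⟩ := exists_lt_of_lt_csSup ⟨0, hA0⟩ (show sSup A - ε < sSup A by linarith)
      rcases (le_csSup hbdd ha).eq_or_lt with h1 | h1
      · rw [← h1]; exact ha.2.2
      · exact hh a hac.le ha.1 h1 ha.2.2
  rcases hcL.eq_or_lt with h | h
  · rw [← h]; exact hPc
  · exfalso
    obtain ⟨ε, hε, hh⟩ := hR _ hc0 h hPc
    have hm : 0 < min ε (L - sSup A) := lt_min hε (by linarith)
    have h1 := hh (sSup A + min ε (L - sSup A)) (by linarith)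
      (by linarith [min_le_left ε (L - sSup A)]) (by linarith [min_le_right ε (L - sSup A)])
    have h2 : sSup A + min ε (L - sSup A) ∈ A :=
      ⟨by linarith, by linarith [min_le_right ε (L - sSup A)], h1⟩
    linarith [le_csSup hbdd h2]

lemma plInt_zero (φ : ℝ → ℝ) : PLInt φ 0 :=
  ⟨0, fun _ => 0, rfl, rfl, fun i j h => absurd h (by omega), fun i => i.elim0⟩

lemma plInt_extend {φ : ℝ → ℝ} {T T' : ℝ} (h : PLInt φ T) (hT : T < T') (m : ℤ)
    (hm : ∀ s ∈ Set.Icc T T', φ s = φ T + (m : ℝ) * (s - T)) : PLInt φ T' := by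
  obtain ⟨n, t, h0, hl, hs, hp⟩ := h
  refine ⟨n + 1, Fin.snoc (α := fun _ => ℝ) t T', ?_, ?_, ?_, ?_⟩
  · have : (0 : Fin (n + 2)) = Fin.castSucc 0 := rfl
    rw [this, Fin.snoc_castSucc, h0]
  · rw [Fin.snoc_last]
  · rw [Fin.strictMono_iff_lt_succ]
    intro i
    refine Fin.lastCases ?_ (fun j => ?_) i
    · rw [Fin.snoc_castSucc, Fin.succ_last, Fin.snoc_last, hl]; exact hT
    · rw [Fin.snoc_castSucc, Fin.succ_castSucc, Fin.snoc_castSucc]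
      exact hs (Fin.castSucc_lt_succ)
  · intro i
    refine Fin.lastCases ?_ (fun j => ?_) i
    · rw [Fin.snoc_castSucc, Fin.succ_last, Fin.snoc_last, hl]; exact ⟨m, hm⟩
    · rw [Fin.snoc_castSucc, Fin.succ_castSucc, Fin.snoc_castSucc]
      exact hp j

lemma LocPL.pl {φ : ℝ → ℝ} {L : ℝ} (hL : 0 ≤ L) (h : LocPL φ L) : PLInt φ L := by
  refine real_ind hL (PLInt φ) (plInt_zero φ) ?_ ?_
  · intro t h0 h1 hP
    obtain ⟨m, ε, hε, hm⟩ := h.1 t h0 h1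
    exact ⟨ε, hε, fun t' h2 h3 _ => plInt_extend hP h2 m fun s hs => hm s ⟨hs.1, by linarith [hs.2]⟩⟩
  · intro t h0 h1
    obtain ⟨m, ε, hε, hm⟩ := h.2 t h0 h1
    refine ⟨ε, hε, fun t' h2 _ h3 hP => plInt_extend hP h3 (-m) fun s hs => ?_⟩
    rw [hm s ⟨by linarith [hs.1], hs.2⟩, hm t' ⟨h2, h3.le⟩]
    push_cast
    ring

lemma plInt_loc {φ : ℝ → ℝ} {L : ℝ} (h : PLInt φ L) : LocPL φ L := by
  obtain ⟨n, t, h0, hl, hs, hp⟩ := h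
  constructor
  · intro r hr0 hrL
    have key : ∀ j : Fin (n + 1), r < t j → ∃ i : Fin n, t i.castSucc ≤ r ∧ r < t i.succ := by
      intro j
      refine Fin.induction ?_ (fun i ih => ?_) j
      · intro h; rw [h0] at h; linarith
      · intro h
        by_cases h' : r < t i.castSucc
        · exact ih h'
        · exact ⟨i, not_lt.1 h', h⟩
    obtain ⟨i, h1, h2⟩ := key (Fin.last n) (by rw [hl]; exact hrL)
    obtain ⟨m, hm⟩ := hp i
    refine ⟨m, t i.succ - r, by linarith, fun s hs => ?_⟩
    rw [hm s ⟨by linarith [hs.1], by linarith [hs.2]⟩, hm r ⟨h1, h2.le⟩]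
    ring
  · intro r hr0 hrL
    have key : ∀ j : Fin (n + 1), r ≤ t j → ∃ i : Fin n, t i.castSucc < r ∧ r ≤ t i.succ := by
      intro j
      refine Fin.induction ?_ (fun i ih => ?_) j
      · intro h; rw [h0] at h; linarith
      · intro h
        by_cases h' : r ≤ t i.castSucc
        · exact ih h'
        · exact ⟨i, not_le.1 h', h⟩
    obtain ⟨i, h1, h2⟩ := key (Fin.last n) (by rw [hl]; exact hrL)
    obtain ⟨m, hm⟩ := hp i
    refine ⟨-m, r - t i.castSucc, by linarith, fun s hs => ?_⟩
    rw [hm s ⟨by linarith [hs.1], by linarith [hs.2]⟩, hm r ⟨h1.le, h2⟩]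
    push_cast
    ring

/-- A function without interior divisor is linear. -/
lemma LocPL.linear {φ : ℝ → ℝ} {L : ℝ} (hL : 0 < L) (h : LocPL φ L)
    (hd : ∀ t, 0 < t → t < L → slopeR φ t + slopeL φ t = 0) :
    ∀ r, 0 ≤ r → r ≤ L → φ r = φ 0 + (slopeR φ 0 : ℝ) * r := by
  refine real_ind hL.le
    (fun T => ∀ r, 0 ≤ r → r ≤ T → φ r = φ 0 + (slopeR φ 0 : ℝ) * r) ?_ ?_ ?_
  · intro r h0 h1
    have : r = 0 := le_antisymm h1 h0
    subst this; simp
  · intro t h0 h1 hP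
    obtain ⟨m, hm⟩ := h.1 t h0 h1
    have hms : m = slopeR φ 0 := by
      rcases h0.eq_or_lt with h2 | h2
      · subst h2; exact hm.slope.symm
      · have hl : HasL φ t (-slopeR φ 0) := by
          refine ⟨t, h2, fun s hs => ?_⟩
          rw [hP s (by linarith [hs.1]) hs.2, hP t h0 le_rfl]
          push_cast; ring
        have := hd t h2 h1
        rw [hl.slope, hm.slope] at this
        omega
    obtain ⟨ε, hε, hm⟩ := hm
    refine ⟨ε, hε, fun t' h2 h3 _ r hr0 hr1 => ?_⟩
    by_cases hrt : r ≤ t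
    · exact hP r hr0 hrt
    · rw [hm r ⟨by linarith, by linarith⟩, hP t h0 le_rfl, hms]; ring
  · intro t h0 h1
    obtain ⟨m, ε, hε, hm⟩ := h.2 t h0 h1
    have hmin : 0 < min ε t := lt_min hε h0
    refine ⟨min ε t / 2, by linarith, fun t' h2 h2' h3 hP r hr0 hr1 => ?_⟩
    have hl : HasL φ t m := ⟨ε, hε, hm⟩
    by_cases hrt : r ≤ t'
    · exact hP r hr0 hrt
    · push Not at hrt
      -- compare on the interval below `t'`
      have h4 := hm t' ⟨by linarith [min_le_left ε t], h3.le⟩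
      have h5 := hm (t - min ε t) ⟨by linarith [min_le_left ε t], by linarith⟩
      have h6 := hm r ⟨by linarith [min_le_left ε t], hr1⟩
      have h7 := hP t' h2' le_rfl
      have h8 := hP (t - min ε t) (by linarith [min_le_right ε t]) (by linarith)
      have h9 : ((m : ℝ) + slopeR φ 0) * (t' - (t - min ε t)) = 0 := by
        rw [h7] at h4; rw [h8] at h5; linarith
      have h10 : ((m : ℝ) + slopeR φ 0) = 0 := by
        rcases mul_eq_zero.1 h9 with h | h
        · exact h
        · exfalso; linarith
      have h11 : (slopeR φ 0 : ℝ) = - m := by linarith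
      rw [h11] at h7 ⊢
      rw [h6]; rw [h7] at h4; linarith

end TriCut
end

section
open scoped Classical
open MetricGraphModel

namespace TriCut

/-! ### Functions on one edge with at most one convex and one concave break point -/

structure EdgeForm (φ : ℝ → ℝ) (L : ℝ) (a X : ℤ) (p : ℝ) (Y : ℤ) (q : ℝ) : Prop where
  hL : 0 < L
  hX : X = 0 ∨ X = 1
  hY : Y = 0 ∨ Y = 1
  hp : X = 1 → 0 < p ∧ p < L
  hq : Y = 1 → 0 < q ∧ q < L
  form : ∀ r, 0 ≤ r → r ≤ L →
    φ r = φ 0 + (a : ℝ) * r + (X : ℝ) * max 0 (r - p) - (Y : ℝ) * max 0 (r - q)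

lemma HasR.slope_iff {φ : ℝ → ℝ} {t : ℝ} (h : ∃ m, HasR φ t m) : HasR φ t (slopeR φ t) := by
  obtain ⟨m, hm⟩ := h
  rw [hm.slope]; exact hm

lemma HasL.slope_iff {φ : ℝ → ℝ} {t : ℝ} (h : ∃ m, HasL φ t m) : HasL φ t (slopeL φ t) := by
  obtain ⟨m, hm⟩ := h
  rw [hm.slope]; exact hm

lemma EdgeForm.of_loc {φ : ℝ → ℝ} {L : ℝ} {X : ℤ} {p : ℝ} {Y : ℤ} {q : ℝ} (hL : 0 < L)
    (h : LocPL φ L) (hX : X = 0 ∨ X = 1) (hY : Y = 0 ∨ Y = 1)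
    (hp : X = 1 → 0 < p ∧ p < L) (hq : Y = 1 → 0 < q ∧ q < L)
    (hd : ∀ t, 0 < t → t < L → slopeR φ t + slopeL φ t =
      (if X = 1 ∧ t = p then 1 else 0) - (if Y = 1 ∧ t = q then 1 else 0)) :
    EdgeForm φ L (slopeR φ 0) X p Y q := by
  let ψ : ℝ → ℝ := fun s => φ s +
    ((((-X : ℤ)) : ℝ) * max 0 (s - p) + ((Y : ℤ) : ℝ) * max 0 (s - q))
  have hψR : ∀ t, 0 ≤ t → t < L → HasR ψ t (slopeR φ t +
      (-X * (if p ≤ t then 1 else 0) + Y * (if q ≤ t then 1 else 0))) := fun t h0 h1 =>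
    (HasR.slope_iff (h.1 t h0 h1)).add (((hasR_max p t).mul _).add ((hasR_max q t).mul _))
  have hψL : ∀ t, 0 < t → t ≤ L → HasL ψ t (slopeL φ t +
      (-X * (if p < t then -1 else 0) + Y * (if q < t then -1 else 0))) := fun t h0 h1 =>
    (HasL.slope_iff (h.2 t h0 h1)).add (((hasL_max p t).mul _).add ((hasL_max q t).mul _))
  have hψ : LocPL ψ L := ⟨fun t h0 h1 => ⟨_, hψR t h0 h1⟩, fun t h0 h1 => ⟨_, hψL t h0 h1⟩⟩
  have hlin := hψ.linear hL (by
    intro t h0 h1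
    rw [(hψR t h0.le h1).slope, (hψL t h0 h1.le).slope]
    have := hd t h0 h1
    have e1 : ∀ (Z : ℤ) (z : ℝ), (Z = 0 ∨ Z = 1) → (if Z = 1 ∧ t = z then (1 : ℤ) else 0) =
        Z * (if z ≤ t then 1 else 0) + Z * (if z < t then -1 else 0) := by
      intro Z z hZ
      rcases hZ with rfl | rfl
      · simp
      · rcases lt_trichotomy t z with h | h | h
        · simp [h.ne, not_le.2 h, not_lt.2 h.le]
        · simp [h]
        · simp [h.ne', h.le, h]
    rw [e1 X p hX, e1 Y q hY] at this
    linarith)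
  have hs0 : slopeR ψ 0 = slopeR φ 0 := by
    rw [(hψR 0 le_rfl hL).slope]
    have e1 : ∀ (Z : ℤ) (z : ℝ), (Z = 0 ∨ Z = 1) → (Z = 1 → 0 < z ∧ z < L) →
        Z * (if z ≤ 0 then (1 : ℤ) else 0) = 0 := by
      intro Z z hZ hz
      rcases hZ with rfl | rfl
      · simp
      · simp [(hz rfl).1]
    have := e1 X p hX hp
    have := e1 Y q hY hq
    linarith
  have hψ0 : ψ 0 = φ 0 := by
    have e1 : ∀ (Z : ℤ) (z : ℝ), (Z = 0 ∨ Z = 1) → (Z = 1 → 0 < z ∧ z < L) →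
        (Z : ℝ) * max 0 (0 - z) = 0 := by
      intro Z z hZ hz
      rcases hZ with rfl | rfl
      · simp
      · rw [max_eq_left (by linarith [(hz rfl).1])]; simp
    have h1 := e1 X p hX hp
    have h2 := e1 Y q hY hq
    simp only [ψ]
    push_cast
    linarith
  refine ⟨hL, hX, hY, hp, hq, fun r h0 h1 => ?_⟩
  have := hlin r h0 h1
  rw [hs0, hψ0] at this
  simp only [ψ] at this
  push_cast at this
  linarith

namespace EdgeForm

variable {φ : ℝ → ℝ} {L : ℝ} {a X : ℤ} {p : ℝ} {Y : ℤ} {q : ℝ}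

lemma hasR (h : EdgeForm φ L a X p Y q) {t : ℝ} (h0 : 0 ≤ t) (h1 : t < L) :
    HasR φ t (a + X * (if p ≤ t then 1 else 0) - Y * (if q ≤ t then 1 else 0)) := by
  have := ((hasR_const (φ 0) t).add (((hasR_id t).mul a).add
    (((hasR_max p t).mul X).add ((hasR_max q t).mul (-Y)))))
  have h2 := this.congr (ψ := φ) h1 (fun s hs => by
    rw [h.form s (by linarith [hs.1]) hs.2]; push_cast; ring)
  convert h2 using 1
  ring

lemma hasL (h : EdgeForm φ L a X p Y q) {t : ℝ} (h0 : 0 < t) (h1 : t ≤ L) :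
    HasL φ t (-a + X * (if p < t then -1 else 0) - Y * (if q < t then -1 else 0)) := by
  have := ((hasL_const (φ 0) t).add (((hasL_id t).mul a).add
    (((hasL_max p t).mul X).add ((hasL_max q t).mul (-Y)))))
  have h2 := this.congr (ψ := φ) h0 (fun s hs => by
    rw [h.form s hs.1 (by linarith [hs.2])]; push_cast; ring)
  convert h2 using 1
  ring

lemma loc (h : EdgeForm φ L a X p Y q) : LocPL φ L :=
  ⟨fun _ h0 h1 => ⟨_, h.hasR h0 h1⟩, fun _ h0 h1 => ⟨_, h.hasL h0 h1⟩⟩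

lemma slope0 (h : EdgeForm φ L a X p Y q) : slopeR φ 0 = a := by
  rw [(h.hasR le_rfl h.hL).slope]
  have e1 : ∀ (Z : ℤ) (z : ℝ), (Z = 0 ∨ Z = 1) → (Z = 1 → 0 < z ∧ z < L) →
      Z * (if z ≤ 0 then (1 : ℤ) else 0) = 0 := by
    intro Z z hZ hz
    rcases hZ with rfl | rfl
    · simp
    · simp [(hz rfl).1]
  have := e1 X p h.hX h.hp
  have := e1 Y q h.hY h.hq
  linarith

lemma slope1 (h : EdgeForm φ L a X p Y q) : slopeL φ L = -a - X + Y := by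
  rw [(h.hasL h.hL le_rfl).slope]
  have e1 : ∀ (Z : ℤ) (z : ℝ), (Z = 0 ∨ Z = 1) → (Z = 1 → 0 < z ∧ z < L) →
      Z * (if z < L then (-1 : ℤ) else 0) = -Z := by
    intro Z z hZ hz
    rcases hZ with rfl | rfl
    · simp
    · simp [(hz rfl).2]
  have := e1 X p h.hX h.hp
  have := e1 Y q h.hY h.hq
  linarith

lemma div (h : EdgeForm φ L a X p Y q) {t : ℝ} (h0 : 0 < t) (h1 : t < L) :
    slopeR φ t + slopeL φ t =
      (if X = 1 ∧ t = p then 1 else 0) - (if Y = 1 ∧ t = q then 1 else 0) := by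
  rw [(h.hasR h0.le h1).slope, (h.hasL h0 h1.le).slope]
  have e1 : ∀ (Z : ℤ) (z : ℝ), (Z = 0 ∨ Z = 1) → (if Z = 1 ∧ t = z then (1 : ℤ) else 0) =
      Z * (if z ≤ t then 1 else 0) + Z * (if z < t then -1 else 0) := by
    intro Z z hZ
    rcases hZ with rfl | rfl
    · simp
    · rcases lt_trichotomy t z with h | h | h
      · simp [h.ne, not_le.2 h, not_lt.2 h.le]
      · simp [h]
      · simp [h.ne', h.le, h]
  rw [e1 X p h.hX, e1 Y q h.hY]
  ring

lemma rev (h : EdgeForm φ L a X p Y q) :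
    EdgeForm (fun r => φ (L - r)) L (-a - X + Y) X (L - p) Y (L - q) := by
  have hL := h.hL
  refine ⟨h.hL, h.hX, h.hY, fun hx => ?_, fun hy => ?_, fun r h0 h1 => ?_⟩
  · have := h.hp hx; constructor <;> linarith
  · have := h.hq hy; constructor <;> linarith
  · have e : ∀ z : ℝ, max 0 (L - r - z) = (L - r - z) + max 0 (r - (L - z)) := by
      intro z
      rcases le_total 0 (L - r - z) with h | h
      · rw [max_eq_right h, max_eq_left (by linarith)]; ring
      · rw [max_eq_left h, max_eq_right (by linarith)]; ring
    have e1 : ∀ (Z : ℤ) (z : ℝ), (Z = 0 ∨ Z = 1) → (Z = 1 → 0 < z ∧ z < L) →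
        (Z : ℝ) * max 0 (L - z) = Z * (L - z) := by
      intro Z z hZ hz
      rcases hZ with rfl | rfl
      · simp
      · rw [max_eq_right (by linarith [(hz rfl).2])]
    simp only [sub_zero]
    rw [h.form (L - r) (by linarith) (by linarith), h.form L h.hL.le le_rfl, e, e,
      e1 X p h.hX h.hp, e1 Y q h.hY h.hq]
    push_cast
    ring

lemma unrev (h : EdgeForm (fun r => φ (L - r)) L a X p Y q) :
    EdgeForm φ L (-a - X + Y) X (L - p) Y (L - q) := by
  have := h.rev
  simpa using this

lemma fL (h : EdgeForm φ L a X p Y q) :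
    φ L = φ 0 + (a : ℝ) * L + (X : ℝ) * (L - p) - (Y : ℝ) * (L - q) := by
  have e1 : ∀ (Z : ℤ) (z : ℝ), (Z = 0 ∨ Z = 1) → (Z = 1 → 0 < z ∧ z < L) →
      (Z : ℝ) * max 0 (L - z) = Z * (L - z) := by
    intro Z z hZ hz
    rcases hZ with rfl | rfl
    · simp
    · rw [max_eq_right (by linarith [(hz rfl).2])]
  rw [h.form L h.hL.le le_rfl, e1 X p h.hX h.hp, e1 Y q h.hY h.hq]

lemma incr (h : EdgeForm φ L a X p Y q) (hlt : φ 0 < φ L) : 0 ≤ a ∧ 1 ≤ a + X := by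
  have hf := h.fL
  have hL := h.hL
  have hp := h.hp
  have hq := h.hq
  have ha : 0 ≤ a := by
    by_contra hneg
    have : (a : ℝ) ≤ -1 := by exact_mod_cast (by omega : a ≤ -1)
    have h3 : (a : ℝ) * L ≤ -1 * L := mul_le_mul_of_nonneg_right this hL.le
    rcases h.hX with rfl | rfl <;> rcases h.hY with rfl | rfl <;> simp at hf hp hq <;> linarith
  refine ⟨ha, ?_⟩
  by_contra hneg
  have h1 : X = 0 := by rcases h.hX with h | h <;> omega
  have h2 : a = 0 := by omega
  subst h1 h2
  rcases h.hY with rfl | rfl <;> simp at hf hp hq <;> linarith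

lemma const (h : EdgeForm φ L a X p Y q) (heq : φ 0 = φ L) :
    a = 0 ∧ X = Y ∧ (X = 1 → p = q) ∧ ∀ r, 0 ≤ r → r ≤ L → φ r = φ 0 := by
  have hf := h.fL
  have hL := h.hL
  have hp := h.hp
  have hq := h.hq
  have ha : a = 0 := by
    by_contra hne
    rcases lt_or_gt_of_ne hne with hn | hn
    · have : (a : ℝ) ≤ -1 := by exact_mod_cast (by omega : a ≤ -1)
      have h3 : (a : ℝ) * L ≤ -1 * L := mul_le_mul_of_nonneg_right this hL.le
      rcases h.hX with rfl | rfl <;> rcases h.hY with rfl | rfl <;> simp at hf hp hq <;> linarith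
    · have : (1 : ℝ) ≤ a := by exact_mod_cast hn
      have h3 : 1 * L ≤ (a : ℝ) * L := mul_le_mul_of_nonneg_right this hL.le
      rcases h.hX with rfl | rfl <;> rcases h.hY with rfl | rfl <;> simp at hf hp hq <;> linarith
  subst ha
  have hform := h.form
  rcases h.hX with rfl | rfl <;> rcases h.hY with rfl | rfl <;> simp at hf hp hq
  · simpa using hform
  · linarith
  · linarith
  · have : p = q := by linarith
    subst this
    simpa using hform

lemma ramp (h : EdgeForm φ L a X p Y q) (hlt : φ 0 < φ L) (h1 : a + X = 1) :
    ∃ s t, 0 ≤ s ∧ s < t ∧ t ≤ L ∧ (X = 1 → s = p) ∧ (X = 0 → s = 0) ∧ (Y = 1 → t = q) ∧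
      (Y = 0 → t = L) ∧
      ∀ r, 0 ≤ r → r ≤ L → φ r = φ 0 + max 0 (r - s) - max 0 (r - t) := by
  have hf := h.fL
  have hL := h.hL
  have hp := h.hp
  have hq := h.hq
  have hform := h.form
  have ha : a = 1 - X := by omega
  subst ha
  refine ⟨if X = 1 then p else 0, if Y = 1 then q else L, ?_⟩
  rcases h.hX with rfl | rfl <;> rcases h.hY with rfl | rfl <;> simp at hf hp hq hform ⊢
  · refine ⟨hL, fun r h0 h1 => ?_⟩
    rw [hform r h0 h1, max_eq_right h0, max_eq_left (by linarith)]; ring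
  · refine ⟨hq.1, hq.2.le, fun r h0 h1 => ?_⟩
    rw [hform r h0 h1, max_eq_right h0]
  · refine ⟨hp.1.le, hp.2, fun r h0 h1 => ?_⟩
    rw [hform r h0 h1, max_eq_left (by linarith : r - L ≤ 0)]; ring
  · refine ⟨hp.1.le, by linarith, hq.2.le, fun r h0 h1 => ?_⟩
    rw [hform r h0 h1]

lemma mono (h : EdgeForm φ L a X p Y q) (hle : φ 0 ≤ φ L) {r r' : ℝ} (h0 : 0 ≤ r) (h1 : r ≤ r')
    (h2 : r' ≤ L) : φ r ≤ φ r' := by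
  rcases hle.eq_or_lt with heq | hlt
  · rw [(h.const heq).2.2.2 r h0 (h1.trans h2), (h.const heq).2.2.2 r' (h0.trans h1) h2]
  have hf := h.fL
  have hL := h.hL
  have hp := h.hp
  have hq := h.hq
  have hY1 : ∀ z : ℝ, max 0 (r' - z) - max 0 (r - z) ≤ r' - r := by
    intro z
    rcases le_total 0 (r' - z) with h | h <;> rcases le_total 0 (r - z) with h' | h' <;>
      simp [h, h'] <;> linarith
  have hX0 : ∀ z : ℝ, 0 ≤ max 0 (r' - z) - max 0 (r - z) := by
    intro z
    have := max_le_max (le_refl (0 : ℝ)) (sub_le_sub_right h1 z)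
    linarith
  by_cases ha : a + X = 1
  · obtain ⟨s, t, h3, h4, h5, -, -, -, -, h6⟩ := h.ramp hlt ha
    rw [h6 r h0 (h1.trans h2), h6 r' (h0.trans h1) h2]
    rcases le_total 0 (r' - s) with g | g <;> rcases le_total 0 (r - s) with g' | g' <;>
    rcases le_total 0 (r' - t) with k | k <;> rcases le_total 0 (r - t) with k' | k' <;>
      simp [g, g', k, k'] <;> linarith
  · have hi := h.incr hlt
    have ha1 : 1 ≤ a := by rcases h.hX with h | h <;> omega
    have ha2 : (1 : ℝ) ≤ a := by exact_mod_cast ha1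
    have h3 : 1 * (r' - r) ≤ (a : ℝ) * (r' - r) := mul_le_mul_of_nonneg_right ha2 (by linarith)
    rw [h.form r h0 (h1.trans h2), h.form r' (h0.trans h1) h2]
    have e1 := hX0 p
    have e2 := hY1 q
    rcases h.hX with rfl | rfl <;> rcases h.hY with rfl | rfl <;> simp <;> linarith

lemma anti (h : EdgeForm φ L a X p Y q) (hle : φ L ≤ φ 0) {r r' : ℝ} (h0 : 0 ≤ r) (h1 : r ≤ r')
    (h2 : r' ≤ L) : φ r' ≤ φ r := by
  have := h.rev.mono (by simpa using hle) (r := L - r') (r' := L - r) (by linarith) (by linarith)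
    (by linarith)
  simpa using this

lemma trunc (h : EdgeForm φ L a X p Y q) {c : ℝ} (hc0 : φ 0 < c) (hcL : c ≤ φ L)
    (h1 : a + X = 1) :
    ∃ r, 0 < r ∧ r ≤ L ∧ φ r = c ∧ (Y = 0 → φ L = c → r = L) ∧
      EdgeForm (fun u => min (φ u) c) L a X p (if r < L then 1 else 0) r := by
  obtain ⟨s, t, h3, h4, h5, hs1, hs0, ht1, ht0, h6⟩ := h.ramp (hc0.trans_le hcL) h1
  have hfL : φ L = φ 0 + (t - s) := by
    rw [h6 L h.hL.le le_rfl, max_eq_right (by linarith), max_eq_right (by linarith)]; ring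
  have hr0 : 0 < s + (c - φ 0) := by linarith
  have hrt : s + (c - φ 0) ≤ t := by linarith
  refine ⟨s + (c - φ 0), hr0, by linarith, ?_, ?_, ?_⟩
  · rw [h6 _ hr0.le (by linarith), max_eq_right (by linarith), max_eq_left (by linarith)]; ring
  · intro hY hL
    have := ht0 hY
    linarith
  · refine ⟨h.hL, h.hX, ?_, h.hp, ?_, ?_⟩
    · split_ifs <;> simp
    · split_ifs with hh
      · exact fun _ => ⟨hr0, hh⟩
      · simp
    · intro r g0 g1
      have e1 : ((if s + (c - φ 0) < L then (1 : ℤ) else 0 : ℤ) : ℝ) *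
          max 0 (r - (s + (c - φ 0))) = max 0 (r - (s + (c - φ 0))) := by
        split_ifs with hh
        · simp
        · rw [max_eq_left (by linarith)]; simp
      have e2 : (a : ℝ) * r + X * max 0 (r - p) = max 0 (r - s) := by
        have ha : a = 1 - X := by omega
        subst ha
        rcases h.hX with rfl | rfl
        · simp [hs0 rfl, g0]
        · rw [hs1 rfl]; simp
      rw [e1, min_eq_left hc0.le, h6 r g0 g1, add_assoc (φ 0), e2]
      rcases le_total 0 (r - s) with g | g <;>
      rcases le_total 0 (r - t) with k | k <;>
      rcases le_total 0 (r - (s + (c - φ 0))) with k' | k' <;>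
        simp only [max_eq_left, max_eq_right, g, k, k'] <;>
        first
          | exact (min_eq_left (by linarith)).trans (by linarith)
          | exact (min_eq_right (by linarith)).trans (by linarith)

end EdgeForm

end TriCut
end

section
open scoped Classical
open MetricGraphModel

namespace TriCut

variable {Γ : MetricGraphModel}

/-! ### Operations on rational functions -/

def rNeg (f : RationalFunction Γ) : RationalFunction Γ where
  vVal := fun v => ((-1 : ℤ) : ℝ) * f.vVal v
  eFun := fun e s => ((-1 : ℤ) : ℝ) * f.eFun e s
  pl := fun e => LocPL.pl (Γ.len_pos e).le
    ⟨fun t h0 h1 => by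
      obtain ⟨m, hm⟩ := (plInt_loc (f.pl e)).1 t h0 h1
      exact ⟨_, hm.mul (-1)⟩,
    fun t h0 h1 => by
      obtain ⟨m, hm⟩ := (plInt_loc (f.pl e)).2 t h0 h1
      exact ⟨_, hm.mul (-1)⟩⟩
  srcVal := fun e => by rw [f.srcVal]
  tgtVal := fun e => by rw [f.tgtVal]

def rAdd (f g : RationalFunction Γ) : RationalFunction Γ where
  vVal := fun v => f.vVal v + g.vVal v
  eFun := fun e s => f.eFun e s + g.eFun e s
  pl := fun e => LocPL.pl (Γ.len_pos e).le
    ⟨fun t h0 h1 => by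
      obtain ⟨m, hm⟩ := (plInt_loc (f.pl e)).1 t h0 h1
      obtain ⟨n, hn⟩ := (plInt_loc (g.pl e)).1 t h0 h1
      exact ⟨_, hm.add hn⟩,
    fun t h0 h1 => by
      obtain ⟨m, hm⟩ := (plInt_loc (f.pl e)).2 t h0 h1
      obtain ⟨n, hn⟩ := (plInt_loc (g.pl e)).2 t h0 h1
      exact ⟨_, hm.add hn⟩⟩
  srcVal := fun e => by rw [f.srcVal, g.srcVal]
  tgtVal := fun e => by rw [f.tgtVal, g.tgtVal]

lemma rHasR (f : RationalFunction Γ) (e : Γ.E) {t : ℝ} (h0 : 0 ≤ t) (h1 : t < Γ.len e) :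
    HasR (f.eFun e) t (slopeR (f.eFun e) t) :=
  HasR.slope_iff ((plInt_loc (f.pl e)).1 t h0 h1)

lemma rHasL (f : RationalFunction Γ) (e : Γ.E) {t : ℝ} (h0 : 0 < t) (h1 : t ≤ Γ.len e) :
    HasL (f.eFun e) t (slopeL (f.eFun e) t) :=
  HasL.slope_iff ((plInt_loc (f.pl e)).2 t h0 h1)

lemma ratDiv_neg (f : RationalFunction Γ) (p : Γ.Pt) : ratDiv (rNeg f) p = - ratDiv f p := by
  have hR : ∀ e t, 0 ≤ t → t < Γ.len e →
      slopeR ((rNeg f).eFun e) t = - slopeR (f.eFun e) t := fun e t h0 h1 => by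
    have h := ((rHasR f e h0 h1).mul (-1)).slope
    exact h.trans (by ring)
  have hL : ∀ e t, 0 < t → t ≤ Γ.len e →
      slopeL ((rNeg f).eFun e) t = - slopeL (f.eFun e) t := fun e t h0 h1 => by
    have h := ((rHasL f e h0 h1).mul (-1)).slope
    exact h.trans (by ring)
  rcases p with v | ⟨e, t, h0, h1⟩
  · simp only [ratDiv]
    rw [← Finset.sum_neg_distrib]
    refine Finset.sum_congr rfl fun e _ => ?_
    rw [hR e 0 le_rfl (Γ.len_pos e), hL e _ (Γ.len_pos e) le_rfl]
    split_ifs <;> ring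
  · simp only [ratDiv]
    rw [hR e t h0.le h1, hL e t h0 h1.le]; ring

lemma ratDiv_add (f g : RationalFunction Γ) (p : Γ.Pt) :
    ratDiv (rAdd f g) p = ratDiv f p + ratDiv g p := by
  have hR : ∀ e t, 0 ≤ t → t < Γ.len e → slopeR ((rAdd f g).eFun e) t =
      slopeR (f.eFun e) t + slopeR (g.eFun e) t := fun e t h0 h1 =>
    ((rHasR f e h0 h1).add (rHasR g e h0 h1)).slope
  have hL : ∀ e t, 0 < t → t ≤ Γ.len e → slopeL ((rAdd f g).eFun e) t =
      slopeL (f.eFun e) t + slopeL (g.eFun e) t := fun e t h0 h1 =>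
    ((rHasL f e h0 h1).add (rHasL g e h0 h1)).slope
  rcases p with v | ⟨e, t, h0, h1⟩
  · simp only [ratDiv]
    rw [← Finset.sum_add_distrib]
    refine Finset.sum_congr rfl fun e _ => ?_
    rw [hR e 0 le_rfl (Γ.len_pos e), hL e _ (Γ.len_pos e) le_rfl]
    split_ifs <;> ring
  · simp only [ratDiv]
    rw [hR e t h0.le h1, hL e t h0 h1.le]; ring

lemma ratEval_liesOn (f : RationalFunction Γ) {e : Γ.E} {p : Γ.Pt} {s : ℝ}
    (h : LiesOn Γ e p s) : ratEval f p = f.eFun e s := by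
  rcases h with ⟨rfl, rfl⟩ | ⟨rfl, rfl⟩ | ⟨h, rfl⟩
  · exact (f.srcVal e).symm
  · exact (f.tgtVal e).symm
  · rfl

lemma liesOn_bounds {e : Γ.E} {p : Γ.Pt} {s : ℝ}
    (h : LiesOn Γ e p s) : 0 ≤ s ∧ s ≤ Γ.len e := by
  have := Γ.len_pos e
  rcases h with ⟨-, rfl⟩ | ⟨-, rfl⟩ | ⟨h, -⟩
  · exact ⟨le_rfl, this.le⟩
  · exact ⟨this.le, le_rfl⟩
  · exact ⟨h.1.le, h.2.le⟩

/-! ### Good divisors: degree three, at most one chip in every open edge -/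

structure Good (Γ : MetricGraphModel) (D : Divisor Γ) where
  X : Γ.E → ℤ
  pos : Γ.E → ℝ
  h01 : ∀ e, X e = 0 ∨ X e = 1
  hv : ∀ v, 0 ≤ D (Sum.inl v)
  hpos : ∀ e, X e = 1 → 0 < pos e ∧ pos e < Γ.len e
  hedg : ∀ e (r : {t : ℝ // 0 < t ∧ t < Γ.len e}),
    D (Sum.inr ⟨e, r⟩) = if X e = 1 ∧ r.1 = pos e then 1 else 0
  htot : ∑ v, D (Sum.inl v) + ∑ e, X e = 3

variable {Dx Dy : Divisor Γ}

lemma edgeForm (Gx : Good Γ Dx) (Gy : Good Γ Dy) (f : RationalFunction Γ)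
    (hf : ∀ p, Dx p = Dy p + ratDiv f p) (e : Γ.E) :
    EdgeForm (f.eFun e) (Γ.len e) (slopeR (f.eFun e) 0) (Gx.X e) (Gx.pos e) (Gy.X e)
      (Gy.pos e) := by
  refine EdgeForm.of_loc (Γ.len_pos e) (plInt_loc (f.pl e)) (Gx.h01 e) (Gy.h01 e) (Gx.hpos e)
    (Gy.hpos e) fun t h0 h1 => ?_
  have := hf (Sum.inr ⟨e, ⟨t, h0, h1⟩⟩)
  rw [Gx.hedg, Gy.hedg] at this
  simp only [ratDiv] at this
  linarith

/-- Edges with exactly one endpoint in `S`. -/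
noncomputable def Cr (Γ : MetricGraphModel) (S : Finset Γ.V) : Finset Γ.E :=
  Finset.univ.filter fun e => ¬ (Γ.src e ∈ S ↔ Γ.tgt e ∈ S)

lemma mem_Cr {S : Finset Γ.V} {e : Γ.E} : e ∈ Cr Γ S ↔ ¬ (Γ.src e ∈ S ↔ Γ.tgt e ∈ S) := by
  simp [Cr]

lemma walk_stay {S : Finset Γ.V} (L : List (Γ.E × Bool)) : ∀ u v : Γ.V, IsWalk Γ L u v →
    (∀ x ∈ L, x.1 ∉ Cr Γ S) → u ∈ S → v ∈ S := by
  induction L with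
  | nil => intro u v h _ hu; rw [show u = v from h] at hu; exact hu
  | cons x xs ih =>
    intro u v h hx hu
    obtain ⟨h1, h2⟩ := h
    refine ih _ _ h2 (fun y hy => hx y (List.mem_cons_of_mem _ hy)) ?_
    have h3 := hx x (List.mem_cons_self ..)
    rw [mem_Cr, not_not] at h3
    rcases x with ⟨e, b⟩
    cases b
    · simp only [dSrc, dTgt] at h1 ⊢
      simp only [Bool.false_eq_true, if_false] at h1 ⊢
      rw [h3, h1]; exact hu
    · simp only [dSrc, dTgt] at h1 ⊢
      simp only [if_true] at h1 ⊢
      rw [← h3, h1]; exact hu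

lemma cut_ge (h3 : Γ.ThreeEdgeConnected) {S : Finset Γ.V} {u w : Γ.V} (hu : u ∈ S)
    (hw : w ∉ S) : 3 ≤ (Cr Γ S).card := by
  by_contra hlt
  obtain ⟨L, hL, hL'⟩ := h3 (Cr Γ S) (by omega) u w
  exact hw (walk_stay L u w hL hL' hu)

structure CutConcl (Γ : MetricGraphModel) (Dx Dy : Divisor Γ) (Gx : Good Γ Dx) (Gy : Good Γ Dy)
    (f : RationalFunction Γ) (S : Finset Γ.V) : Prop where
  card : (Cr Γ S).card = 3
  x_out : ∀ v, v ∉ S → Dx (Sum.inl v) = 0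
  x_edge : ∀ e, Γ.src e ∉ S → Γ.tgt e ∉ S → Gx.X e = 0
  y_in : ∀ v, v ∈ S → Dy (Sum.inl v) = 0
  y_edge : ∀ e, Γ.src e ∈ S → Γ.tgt e ∈ S → Gy.X e = 0
  src_cut : ∀ e, Γ.src e ∈ S → Γ.tgt e ∉ S → slopeR (f.eFun e) 0 + Gx.X e = 1
  tgt_cut : ∀ e, Γ.src e ∉ S → Γ.tgt e ∈ S → slopeL (f.eFun e) (Γ.len e) + Gx.X e = 1

lemma cut_lemma (h3 : Γ.ThreeEdgeConnected) (Gx : Good Γ Dx) (Gy : Good Γ Dy)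
    (f : RationalFunction Γ) (hf : ∀ p, Dx p = Dy p + ratDiv f p) (S : Finset Γ.V)
    {u w : Γ.V} (hu : u ∈ S) (hw : w ∉ S)
    (hlow : ∀ u w, u ∈ S → w ∉ S → f.vVal u < f.vVal w) :
    CutConcl Γ Dx Dy Gx Gy f S := by
  have hge := cut_ge h3 hu hw
  have hE := edgeForm Gx Gy f hf
  set a : Γ.E → ℤ := fun e => slopeR (f.eFun e) 0 with ha
  set b : Γ.E → ℤ := fun e => slopeL (f.eFun e) (Γ.len e) with hb
  have hab : ∀ e, a e + b e + Gx.X e = Gy.X e := by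
    intro e
    have := (hE e).slope1
    simp only [ha, hb]; omega
  have hsrc : ∀ e, Γ.src e ∈ S → Γ.tgt e ∉ S → 1 ≤ a e + Gx.X e := by
    intro e h1 h2
    exact ((hE e).incr (by rw [f.srcVal, f.tgtVal]; exact hlow _ _ h1 h2)).2
  have htgt : ∀ e, Γ.src e ∉ S → Γ.tgt e ∈ S → 1 ≤ b e + Gx.X e := by
    intro e h1 h2
    have := ((hE e).rev.incr (by simp only [sub_zero, sub_self]; rw [f.srcVal, f.tgtVal]; exact hlow _ _ h2 h1)).2
    have h4 := (hE e).slope1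
    simp only [hb]; omega
  let sl : Γ.E → ℤ := fun e => (if Γ.src e ∈ S then a e else 0) + (if Γ.tgt e ∈ S then b e else 0)
    + (if Γ.src e ∈ S ∨ Γ.tgt e ∈ S then Gx.X e else 0)
    - (if ¬ (Γ.src e ∈ S ↔ Γ.tgt e ∈ S) then 1 else 0)
    - (if Γ.src e ∈ S ∧ Γ.tgt e ∈ S then Gy.X e else 0)
  have hsl : ∀ e, 0 ≤ sl e := by
    intro e
    have h1 := hab e
    have h2 := hsrc e
    have h3 := htgt e
    simp only [sl]
    by_cases hs : Γ.src e ∈ S <;> by_cases ht : Γ.tgt e ∈ S <;> simp [hs, ht] at h2 h3 ⊢ <;> omega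
  have hsum : ∑ v ∈ S, (Dx (Sum.inl v) - Dy (Sum.inl v)) =
      ∑ e, ((if Γ.src e ∈ S then a e else 0) + (if Γ.tgt e ∈ S then b e else 0)) := by
    have : ∀ v, Dx (Sum.inl v) - Dy (Sum.inl v) = ∑ e, ((if Γ.src e = v then a e else 0) +
        (if Γ.tgt e = v then b e else 0)) := by
      intro v
      have := hf (Sum.inl v)
      simp only [ratDiv] at this
      rw [this]
      simp only [ha, hb]
      ring
    simp only [this]
    rw [Finset.sum_comm]
    refine Finset.sum_congr rfl fun e _ => ?_
    rw [Finset.sum_add_distrib, Finset.sum_ite_eq, Finset.sum_ite_eq]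
  have hk : ∑ e, (if ¬ (Γ.src e ∈ S ↔ Γ.tgt e ∈ S) then (1 : ℤ) else 0) = (Cr Γ S).card := by
    rw [Finset.sum_ite]; simp [Cr]
  have hsplit : ∑ v, Dx (Sum.inl v) = ∑ v ∈ S, Dx (Sum.inl v) + ∑ v ∈ Sᶜ, Dx (Sum.inl v) :=
    (Finset.sum_add_sum_compl S _).symm
  let T' : Γ.E → ℤ := fun e => if Γ.src e ∈ S ∨ Γ.tgt e ∈ S then 0 else Gx.X e
  let I : Γ.E → ℤ := fun e => if Γ.src e ∈ S ∧ Γ.tgt e ∈ S then Gy.X e else 0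
  have hXe : ∑ e, Gx.X e = ∑ e, T' e + ∑ e, (if Γ.src e ∈ S ∨ Γ.tgt e ∈ S then Gx.X e else 0) := by
    rw [← Finset.sum_add_distrib]
    refine Finset.sum_congr rfl fun e _ => ?_
    simp only [T']; split_ifs <;> simp
  have hslsum : ∑ e, sl e = ∑ e, ((if Γ.src e ∈ S then a e else 0) +
      (if Γ.tgt e ∈ S then b e else 0))
      + ∑ e, (if Γ.src e ∈ S ∨ Γ.tgt e ∈ S then Gx.X e else 0) - (Cr Γ S).card - ∑ e, I e := by
    rw [← hk]
    simp only [sl, I, Finset.sum_sub_distrib, Finset.sum_add_distrib]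
  have htot := Gx.htot
  rw [Finset.sum_sub_distrib] at hsum
  have hX0 : ∀ e, 0 ≤ Gx.X e := fun e => by rcases Gx.h01 e with h | h <;> omega
  have hY0 : ∀ e, 0 ≤ Gy.X e := fun e => by rcases Gy.h01 e with h | h <;> omega
  have hT0 : ∀ e, 0 ≤ T' e := fun e => by
    simp only [T']; have := hX0 e; split_ifs <;> simp [this]
  have hI0 : ∀ e, 0 ≤ I e := fun e => by
    simp only [I]; have := hY0 e; split_ifs <;> simp [this]
  have n1 : 0 ≤ ∑ e, sl e := Finset.sum_nonneg fun e _ => hsl e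
  have n2 : 0 ≤ ∑ e, T' e := Finset.sum_nonneg fun e _ => hT0 e
  have n3 : 0 ≤ ∑ e, I e := Finset.sum_nonneg fun e _ => hI0 e
  have n4 : 0 ≤ ∑ v ∈ Sᶜ, Dx (Sum.inl v) := Finset.sum_nonneg fun v _ => Gx.hv v
  have n5 : 0 ≤ ∑ v ∈ S, Dy (Sum.inl v) := Finset.sum_nonneg fun v _ => Gy.hv v
  have hge' : (3 : ℤ) ≤ (Cr Γ S).card := by exact_mod_cast hge
  have z0 : ((Cr Γ S).card : ℤ) = 3 := by omega
  have z1 : ∑ e, sl e = 0 := by omega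
  have z2 : ∑ e, T' e = 0 := by omega
  have z3 : ∑ e, I e = 0 := by omega
  have z4 : ∑ v ∈ Sᶜ, Dx (Sum.inl v) = 0 := by omega
  have z5 : ∑ v ∈ S, Dy (Sum.inl v) = 0 := by omega
  rw [Finset.sum_eq_zero_iff_of_nonneg (fun e _ => hsl e)] at z1
  rw [Finset.sum_eq_zero_iff_of_nonneg (fun e _ => hT0 e)] at z2
  rw [Finset.sum_eq_zero_iff_of_nonneg (fun e _ => hI0 e)] at z3
  rw [Finset.sum_eq_zero_iff_of_nonneg (fun v _ => Gx.hv v)] at z4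
  rw [Finset.sum_eq_zero_iff_of_nonneg (fun v _ => Gy.hv v)] at z5
  refine ⟨by exact_mod_cast z0, fun v hv => z4 v (by simp [hv]), fun e h1 h2 => ?_,
    fun v hv => z5 v hv, fun e h1 h2 => ?_, fun e h1 h2 => ?_, fun e h1 h2 => ?_⟩
  · have := z2 e (Finset.mem_univ _)
    simpa [T', h1, h2] using this
  · have := z3 e (Finset.mem_univ _)
    simpa [I, h1, h2] using this
  · have := z1 e (Finset.mem_univ _)
    simp [sl, h1, h2] at this
    simp only [ha] at this
    linarith
  · have := z1 e (Finset.mem_univ _)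
    simp [sl, h1, h2] at this
    simp only [hb] at this
    linarith

/-- If `f` is constant on the vertices the divisors agree. -/
lemma eq_of_const (Gx : Good Γ Dx) (Gy : Good Γ Dy)
    (f : RationalFunction Γ) (hf : ∀ p, Dx p = Dy p + ratDiv f p)
    (hc : ∀ u w, f.vVal u = f.vVal w) : Dx = Dy := by
  have hE := edgeForm Gx Gy f hf
  have hC := fun e => (hE e).const (by rw [f.srcVal, f.tgtVal]; exact hc _ _)
  funext p
  rcases p with v | ⟨e, r⟩
  · rw [hf]
    simp only [ratDiv]
    rw [Finset.sum_eq_zero, add_zero]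
    intro e _
    rw [(hE e).slope1, (hC e).1, (hC e).2.1]
    simp
  · rw [Gx.hedg, Gy.hedg, (hC e).2.1]
    by_cases h : Gx.X e = 1
    · rw [(hC e).2.2.1 h]
    · have h' : ¬ Gy.X e = 1 := by rw [← (hC e).2.1]; exact h
      simp [h']

/-- Minimum set of the vertex values. -/
lemma exists_min (Gx : Good Γ Dx) (Gy : Good Γ Dy)
    (f : RationalFunction Γ) (hf : ∀ p, Dx p = Dy p + ratDiv f p) (hne : Dx ≠ Dy) :
    ∃ u w, (∀ v, f.vVal u ≤ f.vVal v) ∧ (∀ v, f.vVal v ≤ f.vVal w) ∧ f.vVal u < f.vVal w := by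
  have hV : Nonempty Γ.V := by
    by_contra hV
    rw [not_nonempty_iff] at hV
    exact hne (eq_of_const Gx Gy f hf fun u => (hV.false u).elim)
  obtain ⟨u, hu⟩ := Finite.exists_min f.vVal
  obtain ⟨w, hw⟩ := Finite.exists_max f.vVal
  refine ⟨u, w, hu, hw, lt_of_not_ge fun h => hne (eq_of_const Gx Gy f hf fun a b => ?_)⟩
  have := hu a; have := hu b; have := hw a; have := hw b
  linarith

/-- Everything about the position of the chips of `Dx`. -/
lemma level_x (h3 : Γ.ThreeEdgeConnected) (Gx : Good Γ Dx) (Gy : Good Γ Dy)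
    (f : RationalFunction Γ) (hf : ∀ p, Dx p = Dy p + ratDiv f p) {u w : Γ.V}
    (hu : ∀ v, f.vVal u ≤ f.vVal v) (huw : f.vVal u < f.vVal w) (p : Γ.Pt) (hp : Dx p ≠ 0) :
    ratEval f p = f.vVal u ∧ Dy p = 0 := by
  let S : Finset Γ.V := Finset.univ.filter fun v => f.vVal v = f.vVal u
  have hS : ∀ v, v ∈ S ↔ f.vVal v = f.vVal u := by simp [S]
  have hC := cut_lemma h3 Gx Gy f hf S (u := u) (w := w) (by simp [S]) (by simp [S, huw.ne'])
    (fun a b ha hb => by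
      rw [hS] at ha hb
      rw [ha]; exact lt_of_le_of_ne (hu b) (Ne.symm hb))
  have hE := edgeForm Gx Gy f hf
  rcases p with v | ⟨e, r, hr0, hr1⟩
  · have hv : v ∈ S := by
      by_contra hv
      exact hp (hC.x_out v hv)
    exact ⟨(hS v).1 hv, hC.y_in v hv⟩
  · rw [Gx.hedg] at hp
    have hX : Gx.X e = 1 ∧ r = Gx.pos e := by
      by_contra h; simp [h] at hp
    by_cases hs : Γ.src e ∈ S <;> by_cases ht : Γ.tgt e ∈ S
    · exfalso
      have hs' := (hS _).1 hs
      have ht' := (hS _).1 ht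
      have := ((hE e).const (by rw [f.srcVal, f.tgtVal, hs', ht'])).2.1
      have := hC.y_edge e hs ht
      omega
    · have hlt : f.vVal (Γ.src e) < f.vVal (Γ.tgt e) := by
        rw [(hS _).1 hs]; exact lt_of_le_of_ne (hu _) (fun h => ht ((hS _).2 h.symm))
      obtain ⟨s, t, h4, h5, h6, hx1, -, hy1, -, h7⟩ := (hE e).ramp
        (by rw [f.srcVal, f.tgtVal]; exact hlt) (hC.src_cut e hs ht)
      have hrs : r = s := by rw [hX.2, hx1 hX.1]
      constructor
      · show f.eFun e r = _
        rw [h7 r hr0.le hr1.le, f.srcVal, (hS _).1 hs, max_eq_left (by linarith),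
          max_eq_left (by linarith)]; ring
      · rw [Gy.hedg, if_neg]
        rintro ⟨hy, hry⟩
        have := hy1 hy
        simp only at hry
        linarith
    · have hlt : f.vVal (Γ.tgt e) < f.vVal (Γ.src e) := by
        rw [(hS _).1 ht]; exact lt_of_le_of_ne (hu _) (fun h => hs ((hS _).2 h.symm))
      have hsl := (hE e).slope1
      have htc := hC.tgt_cut e hs ht
      obtain ⟨s, t, h4, h5, h6, hx1, -, hy1, -, h7⟩ := (hE e).rev.ramp
        (by simp only [sub_zero, sub_self]; rw [f.srcVal, f.tgtVal]; exact hlt) (by omega)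
      have hrs : Γ.len e - r = s := by rw [hX.2, hx1 hX.1]
      constructor
      · show f.eFun e r = _
        have := h7 (Γ.len e - r) (by linarith) (by linarith)
        simp only [sub_zero, sub_sub_cancel] at this
        rw [this, f.tgtVal, (hS _).1 ht, max_eq_left (by linarith), max_eq_left (by linarith)]
        ring
      · rw [Gy.hedg, if_neg]
        rintro ⟨hy, hry⟩
        have := hy1 hy
        simp only at hry
        linarith
    · have := hC.x_edge e hs ht
      omega

lemma disjoint_supp (h3 : Γ.ThreeEdgeConnected) (Gx : Good Γ Dx) (Gy : Good Γ Dy)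
    (f : RationalFunction Γ) (hf : ∀ p, Dx p = Dy p + ratDiv f p) (hne : Dx ≠ Dy) (p : Γ.Pt)
    (hp : Dx p ≠ 0) : Dy p = 0 := by
  obtain ⟨u, w, h1, -, h2⟩ := exists_min Gx Gy f hf hne
  exact (level_x h3 Gx Gy f hf h1 h2 p hp).2

lemma hf_neg (f : RationalFunction Γ) (hf : ∀ p, Dx p = Dy p + ratDiv f p) (p : Γ.Pt) :
    Dy p = Dx p + ratDiv (rNeg f) p := by
  rw [ratDiv_neg, hf]; ring

lemma level_y (h3 : Γ.ThreeEdgeConnected) (Gx : Good Γ Dx) (Gy : Good Γ Dy)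
    (f : RationalFunction Γ) (hf : ∀ p, Dx p = Dy p + ratDiv f p) {u w : Γ.V}
    (hw : ∀ v, f.vVal v ≤ f.vVal w) (huw : f.vVal u < f.vVal w) (p : Γ.Pt) (hp : Dy p ≠ 0) :
    ratEval f p = f.vVal w := by
  have := (level_x h3 Gy Gx (rNeg f) (hf_neg f hf) (u := w) (w := u)
    (fun v => by simp only [rNeg]; push_cast; linarith [hw v])
    (by simp only [rNeg]; push_cast; linarith) p hp).1
  have h2 : ratEval (rNeg f) p = ((-1 : ℤ) : ℝ) * ratEval f p := by
    rcases p with v | q <;> rfl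
  rw [h2] at this
  simp only [rNeg] at this
  push_cast at this
  linarith

/-! ### Good divisors from points -/

lemma good_of_points {D : Divisor Γ} (P : Fin 3 → Γ.Pt)
    (hD : ∀ z, D z = ∑ i, unitDiv Γ (P i) z)
    (hP : ∀ i j, i ≠ j → ¬ SameEdgeInterior Γ (P i) (P j)) : Nonempty (Good Γ D) := by
  have huniq : ∀ e i j, interiorOf Γ e (P i) → interiorOf Γ e (P j) → i = j := by
    intro e i j hi hj
    by_contra hne
    exact hP i j hne ⟨e, hi, hj⟩
  let X : Γ.E → ℤ := fun e => ∑ i, if interiorOf Γ e (P i) then 1 else 0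
  let pos : Γ.E → ℝ := fun e => if h : ∃ i, ∃ q : {t : ℝ // 0 < t ∧ t < Γ.len e},
    P i = Sum.inr ⟨e, q⟩ then h.choose_spec.choose.1 else 0
  have hX1 : ∀ e i, interiorOf Γ e (P i) → X e = 1 := by
    intro e i hi
    simp only [X]
    rw [Finset.sum_eq_single i, if_pos hi]
    · intro j _ hj
      rw [if_neg (fun h => hj (huniq e j i h hi))]
    · simp
  have hX0 : ∀ e, (¬ ∃ i, interiorOf Γ e (P i)) → X e = 0 := by
    intro e hi
    push Not at hi
    simp only [X]
    exact Finset.sum_eq_zero fun i _ => by rw [if_neg (hi i)]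
  have hpos : ∀ e i (q : {t : ℝ // 0 < t ∧ t < Γ.len e}), P i = Sum.inr ⟨e, q⟩ → pos e = q.1 := by
    intro e i q hq
    have hex : ∃ i, ∃ q : {t : ℝ // 0 < t ∧ t < Γ.len e}, P i = Sum.inr ⟨e, q⟩ := ⟨i, q, hq⟩
    simp only [pos]
    rw [dif_pos hex]
    have h1 := hex.choose_spec.choose_spec
    have h2 := huniq e _ i ⟨_, h1⟩ ⟨_, hq⟩
    have h3 := h1.symm.trans ((congrArg P h2).trans hq)
    simp only [Sum.inr.injEq, Sigma.mk.injEq, heq_eq_eq, true_and] at h3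
    rw [h3]
  refine ⟨⟨X, pos, ?_, ?_, ?_, ?_, ?_⟩⟩
  · intro e
    by_cases h : ∃ i, interiorOf Γ e (P i)
    · obtain ⟨i, hi⟩ := h
      exact Or.inr (hX1 e i hi)
    · exact Or.inl (hX0 e h)
  · intro v
    rw [hD]
    refine Finset.sum_nonneg fun i _ => ?_
    simp only [unitDiv]; split_ifs <;> simp
  · intro e he
    by_cases h : ∃ i, interiorOf Γ e (P i)
    · obtain ⟨i, q, hq⟩ := h
      rw [hpos e i q hq]; exact q.2
    · rw [hX0 e h] at he; simp at he
  · intro e r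
    rw [hD]
    by_cases h : ∃ i, interiorOf Γ e (P i)
    · obtain ⟨i, hi⟩ := h
      have hi' := hi
      obtain ⟨q, hq⟩ := hi'
      rw [hpos e i q hq, hX1 e i hi, Finset.sum_eq_single i]
      · simp only [unitDiv, hq, true_and, Sum.inr.injEq, Sigma.mk.injEq, heq_eq_eq, Subtype.ext_iff]
      · intro j _ hj
        simp only [unitDiv]
        rw [if_neg]
        intro h
        exact hj (huniq e j i ⟨r, h.symm⟩ hi)
      · simp
    · rw [hX0 e h]
      simp only [zero_ne_one, false_and, if_false]
      refine Finset.sum_eq_zero fun i _ => ?_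
      simp only [unitDiv]
      rw [if_neg]
      intro h'
      exact h ⟨i, r, h'.symm⟩
  · simp only [hD, X]
    rw [Finset.sum_comm, Finset.sum_comm (s := (Finset.univ : Finset Γ.E)), ← Finset.sum_add_distrib]
    have : ∀ i, (∑ v, unitDiv Γ (P i) (Sum.inl v) +
        ∑ e, if interiorOf Γ e (P i) then (1 : ℤ) else 0) = 1 := by
      intro i
      generalize P i = R
      rcases R with v | ⟨e, q⟩
      · have h1 : ∀ e, ¬ interiorOf Γ e (Sum.inl v) := by
          rintro e ⟨q, hq⟩; simp at hq
        rw [Finset.sum_eq_zero (s := (Finset.univ : Finset Γ.E)) (fun e _ => if_neg (h1 e))]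
        simp [unitDiv]
      · rw [Finset.sum_eq_zero (by simp [unitDiv]), zero_add, Finset.sum_eq_single e]
        · exact if_pos ⟨q, rfl⟩
        · intro e' _ hne
          refine if_neg ?_
          rintro ⟨q', hq'⟩
          simp only [Sum.inr.injEq, Sigma.mk.injEq] at hq'
          exact hne hq'.1.symm
        · simp
    rw [Finset.sum_congr rfl fun i _ => this i]
    simp

lemma good_of_admissible {D : Divisor Γ} {x : Γ.V} (h : AdmissibleRep Γ D x Dx) :
    Nonempty (Good Γ Dx) := by
  obtain ⟨-, p, q, rfl, hpq⟩ := h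
  have hx : ∀ e, ¬ interiorOf Γ e (Sum.inl x) := by
    rintro e ⟨q, hq⟩; simp at hq
  refine good_of_points ![Sum.inl x, p, q] (fun z => by simp [Fin.sum_univ_three]) ?_
  intro i j hij hs
  obtain ⟨e, h1, h2⟩ := hs
  fin_cases i <;> fin_cases j <;> simp at h1 h2 hij
  · exact hx e h1
  · exact hx e h1
  · exact hx e h2
  · exact hpq ⟨e, h1, h2⟩
  · exact hx e h2
  · exact hpq ⟨e, h2, h1⟩

end TriCut
end

section
open scoped Classical
open MetricGraphModel

namespace TriCut

variable {Γ : MetricGraphModel} {Dx Dy : Divisor Γ}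

/-- Contribution of one edge to the divisor of a function at a vertex. -/
noncomputable def vc (Γ : MetricGraphModel) (ψ : ℝ → ℝ) (e : Γ.E) (v : Γ.V) : ℤ :=
  (if Γ.src e = v then slopeR ψ 0 else 0) + (if Γ.tgt e = v then slopeL ψ (Γ.len e) else 0)

lemma ne_in {S : Finset Γ.V} {a v : Γ.V} (h : a ∈ S) (hv : v ∉ S) : ¬ a = v :=
  fun h' => hv (h' ▸ h)

lemma ne_out {S : Finset Γ.V} {a v : Γ.V} (h : a ∉ S) (hv : v ∈ S) : ¬ a = v :=
  fun h' => h (h' ▸ hv)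

structure TruncEdge (Γ : MetricGraphModel) (Dx Dy : Divisor Γ) (Gx : Good Γ Dx) (Gy : Good Γ Dy)
    (f : RationalFunction Γ) (S : Finset Γ.V) (c : ℝ) (e : Γ.E) (δ : Divisor Γ) : Prop where
  loc : LocPL (fun u => min (f.eFun e u) c) (Γ.len e)
  hin : ∀ v ∈ S, vc Γ (fun u => min (f.eFun e u) c) e v = vc Γ (f.eFun e) e v ∧ δ (Sum.inl v) = 0
  hout : ∀ v, v ∉ S → vc Γ (fun u => min (f.eFun e u) c) e v + δ (Sum.inl v) = 0
  hedg : ∀ t : {t : ℝ // 0 < t ∧ t < Γ.len e}, slopeR (fun u => min (f.eFun e u) c) t.1 +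
    slopeL (fun u => min (f.eFun e u) c) t.1 + δ (Sum.inr ⟨e, t⟩) = Dx (Sum.inr ⟨e, t⟩)
  hoth : ∀ e' (t : {t : ℝ // 0 < t ∧ t < Γ.len e'}), e' ≠ e → δ (Sum.inr ⟨e', t⟩) = 0
  hcr : e ∈ Cr Γ S → ∃ P r, LiesOn Γ e P r ∧ δ = unitDiv Γ P ∧ f.eFun e r = c ∧
    (Gy.X e = 0 → ∀ w, w ∉ S → f.vVal w = c → Γ.Incident e w → P = Sum.inl w)
  hncr : e ∉ Cr Γ S → δ = 0

lemma trunc_edge (Gx : Good Γ Dx) (Gy : Good Γ Dy)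
    (f : RationalFunction Γ) (hf : ∀ p, Dx p = Dy p + ratDiv f p) (S : Finset Γ.V)
    (hC : CutConcl Γ Dx Dy Gx Gy f S) (c : ℝ) (hS : ∀ v ∈ S, f.vVal v < c)
    (hS' : ∀ v, v ∉ S → c ≤ f.vVal v) (e : Γ.E) :
    ∃ δ, TruncEdge Γ Dx Dy Gx Gy f S c e δ := by
  have hE := edgeForm Gx Gy f hf e
  have hlen := Γ.len_pos e
  by_cases hs : Γ.src e ∈ S <;> by_cases ht : Γ.tgt e ∈ S
  · -- inside
    have hncr : e ∉ Cr Γ S := by rw [mem_Cr]; simp [hs, ht]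
    have hlt : ∀ r, 0 ≤ r → r ≤ Γ.len e → f.eFun e r < c := by
      intro r h0 h1
      have a1 := hS _ hs
      have a2 := hS _ ht
      rw [← f.srcVal] at a1
      rw [← f.tgtVal] at a2
      rcases le_total (f.eFun e 0) (f.eFun e (Γ.len e)) with h | h
      · exact (hE.mono h h0 h1 le_rfl).trans_lt a2
      · exact (hE.anti h le_rfl h0 h1).trans_lt a1
    have hE' : EdgeForm (fun u => min (f.eFun e u) c) (Γ.len e) (slopeR (f.eFun e) 0) (Gx.X e)
        (Gx.pos e) (Gy.X e) (Gy.pos e) := by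
      refine ⟨hE.hL, hE.hX, hE.hY, hE.hp, hE.hq, fun r h0 h1 => ?_⟩
      rw [min_eq_left (hlt r h0 h1).le, min_eq_left (hlt 0 le_rfl hlen.le).le]
      exact hE.form r h0 h1
    refine ⟨0, hE'.loc, fun v hv => ⟨?_, rfl⟩, fun v hv => ?_, fun t => ?_, fun _ _ _ => rfl,
      fun h => (hncr h).elim, fun _ => rfl⟩
    · simp only [vc]
      rw [hE'.slope0, hE'.slope1, hE.slope1]
    · simp only [vc]
      rw [if_neg (ne_in hs hv), if_neg (ne_in ht hv)]; rfl
    · rw [hE'.div t.2.1 t.2.2, hC.y_edge e hs ht, Gx.hedg]; simp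
  · -- src in, tgt out
    have hcr : e ∈ Cr Γ S := by rw [mem_Cr]; simp [hs, ht]
    have h1 := hC.src_cut e hs ht
    obtain ⟨r, hr0, hr1, hrc, hrL, hE'⟩ := hE.trunc (c := c) (by rw [f.srcVal]; exact hS _ hs)
      (by rw [f.tgtVal]; exact hS' _ ht) h1
    have hst : Γ.src e ≠ Γ.tgt e := fun h => ht (h ▸ hs)
    rcases hr1.eq_or_lt with heq | hlt
    · refine ⟨unitDiv Γ (Sum.inl (Γ.tgt e)), hE'.loc, fun v hv => ⟨?_, ?_⟩, fun v hv => ?_,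
        fun t => ?_, fun _ _ _ => ?_, fun _ => ⟨_, r, Or.inr (Or.inl ⟨rfl, heq⟩), rfl, hrc, ?_⟩,
        fun h => (h hcr).elim⟩
      · simp only [vc]
        rw [hE'.slope0, if_neg (ne_out ht hv), if_neg (ne_out ht hv)]
      · simp only [unitDiv]
        rw [if_neg]; intro h
        simp only [Sum.inl.injEq] at h
        exact ht (h ▸ hv)
      · simp only [vc, unitDiv, Sum.inl.injEq]
        rw [hE'.slope1, if_neg (ne_in hs hv)]
        by_cases h : Γ.tgt e = v
        · rw [if_pos h, if_pos h.symm, if_neg (by rw [heq]; exact lt_irrefl _)]; omega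
        · rw [if_neg h, if_neg (fun h' => h h'.symm)]; rfl
      · rw [hE'.div t.2.1 t.2.2, Gx.hedg]; simp [heq, unitDiv]
      · simp [unitDiv]
      · intro _ w hw hwc hi
        rcases hi with h | h
        · exact (hw (h ▸ hs)).elim
        · rw [h]
    · refine ⟨unitDiv Γ (Sum.inr ⟨e, r, hr0, hlt⟩), hE'.loc, fun v hv => ⟨?_, ?_⟩, fun v hv => ?_,
        fun t => ?_, fun e' t hne => ?_, fun _ => ⟨_, r, Or.inr (Or.inr ⟨⟨hr0, hlt⟩, rfl⟩), rfl, hrc, ?_⟩,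
        fun h => (h hcr).elim⟩
      · simp only [vc]
        rw [hE'.slope0, if_neg (ne_out ht hv), if_neg (ne_out ht hv)]
      · simp [unitDiv]
      · simp only [vc]
        rw [hE'.slope1, if_neg (ne_in hs hv)]
        by_cases h : Γ.tgt e = v
        · rw [if_pos h, if_pos hlt]; simp [unitDiv]; omega
        · rw [if_neg h]; simp [unitDiv]
      · rw [hE'.div t.2.1 t.2.2, Gx.hedg]
        simp [hlt, unitDiv, Subtype.ext_iff]
      · simp [unitDiv, hne]
      · intro hY w hw hwc hi
        rcases hi with h | h
        · exact (hw (h ▸ hs)).elim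
        · have := hrL hY (by rw [f.tgtVal, h, hwc])
          linarith
  · -- src out, tgt in
    have hcr : e ∈ Cr Γ S := by rw [mem_Cr]; simp [hs, ht]
    have h1 := hC.tgt_cut e hs ht
    rw [hE.slope1] at h1
    obtain ⟨r, hr0, hr1, hrc, hrL, hE''⟩ := hE.rev.trunc (c := c)
      (by simp only [sub_zero]; rw [f.tgtVal]; exact hS _ ht)
      (by simp only [sub_self]; rw [f.srcVal]; exact hS' _ hs) h1
    have hE' := EdgeForm.unrev (φ := fun u => min (f.eFun e u) c) hE''
    simp only [sub_sub_cancel, sub_self] at hE' hrL hrc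
    have hst : Γ.src e ≠ Γ.tgt e := fun h => hs (h ▸ ht)
    rcases hr1.eq_or_lt with heq | hlt
    · refine ⟨unitDiv Γ (Sum.inl (Γ.src e)), hE'.loc, fun v hv => ⟨?_, ?_⟩, fun v hv => ?_,
        fun t => ?_, fun _ _ _ => ?_,
        fun _ => ⟨_, Γ.len e - r, Or.inl ⟨rfl, by linarith⟩, rfl, hrc, ?_⟩,
        fun h => (h hcr).elim⟩
      · simp only [vc]
        rw [hE'.slope1, hE.slope1, if_neg (ne_out hs hv), if_neg (ne_out hs hv)]
        congr 1; split_ifs <;> omega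
      · simp only [unitDiv]
        rw [if_neg]; intro h
        simp only [Sum.inl.injEq] at h
        exact hs (h ▸ hv)
      · simp only [vc, unitDiv, Sum.inl.injEq]
        rw [hE'.slope0, if_neg (ne_in ht hv)]
        by_cases h : Γ.src e = v
        · rw [if_pos h, if_pos h.symm, if_neg (by rw [heq]; exact lt_irrefl _)]; omega
        · rw [if_neg h, if_neg (fun h' => h h'.symm)]; rfl
      · rw [hE'.div t.2.1 t.2.2, Gx.hedg]; simp [heq, unitDiv]
      · simp [unitDiv]
      · intro _ w hw hwc hi
        rcases hi with h | h
        · rw [h]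
        · exact (hw (h ▸ ht)).elim
    · refine ⟨unitDiv Γ (Sum.inr ⟨e, Γ.len e - r, by linarith, by linarith⟩), hE'.loc,
        fun v hv => ⟨?_, ?_⟩, fun v hv => ?_,
        fun t => ?_, fun e' t hne => ?_,
        fun _ => ⟨_, Γ.len e - r, Or.inr (Or.inr ⟨⟨by linarith, by linarith⟩, rfl⟩), rfl, hrc, ?_⟩,
        fun h => (h hcr).elim⟩
      · simp only [vc]
        rw [hE'.slope1, hE.slope1, if_neg (ne_out hs hv), if_neg (ne_out hs hv)]
        congr 1; split_ifs <;> omega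
      · simp [unitDiv]
      · simp only [vc]
        rw [hE'.slope0, if_neg (ne_in ht hv)]
        by_cases h : Γ.src e = v
        · rw [if_pos h, if_pos hlt]; simp [unitDiv]; omega
        · rw [if_neg h]; simp [unitDiv]
      · rw [hE'.div t.2.1 t.2.2, Gx.hedg]
        simp [hlt, unitDiv, Subtype.ext_iff]
      · simp [unitDiv, hne]
      · intro hY w hw hwc hi
        rcases hi with h | h
        · have := hrL hY (by rw [f.srcVal, h, hwc])
          linarith
        · exact (hw (h ▸ ht)).elim
  · -- outside
    have hncr : e ∉ Cr Γ S := by rw [mem_Cr]; simp [hs, ht]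
    have hge : ∀ r, 0 ≤ r → r ≤ Γ.len e → c ≤ f.eFun e r := by
      intro r h0 h1
      have a1 := hS' _ hs
      have a2 := hS' _ ht
      rw [← f.srcVal] at a1
      rw [← f.tgtVal] at a2
      rcases le_total (f.eFun e 0) (f.eFun e (Γ.len e)) with h | h
      · exact a1.trans (hE.mono h le_rfl h0 h1)
      · exact a2.trans (hE.anti h h0 h1 le_rfl)
    have hE' : EdgeForm (fun u => min (f.eFun e u) c) (Γ.len e) 0 0 0 0 0 := by
      refine ⟨hE.hL, Or.inl rfl, Or.inl rfl, by simp, by simp, fun r h0 h1 => ?_⟩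
      rw [min_eq_right (hge r h0 h1), min_eq_right (hge 0 le_rfl hlen.le)]
      simp
    refine ⟨0, hE'.loc, fun v hv => ⟨?_, rfl⟩, fun v hv => ?_, fun t => ?_, fun _ _ _ => rfl,
      fun h => (hncr h).elim, fun _ => rfl⟩
    · simp only [vc]
      rw [if_neg (ne_out hs hv), if_neg (ne_out ht hv),
        if_neg (ne_out hs hv), if_neg (ne_out ht hv)]
    · simp only [vc]
      rw [hE'.slope0, hE'.slope1]; simp
    · rw [hE'.div t.2.1 t.2.2, Gx.hedg, hC.x_edge e hs ht]; simp

/-- The intermediate divisor at level `c`. -/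
lemma trunc_div (Gx : Good Γ Dx) (Gy : Good Γ Dy)
    (f : RationalFunction Γ) (hf : ∀ p, Dx p = Dy p + ratDiv f p) (S : Finset Γ.V)
    (hC : CutConcl Γ Dx Dy Gx Gy f S) (c : ℝ) (hS : ∀ v ∈ S, f.vVal v < c)
    (hS' : ∀ v, v ∉ S → c ≤ f.vVal v) :
    ∃ (P : Γ.E → Γ.Pt) (r : Γ.E → ℝ) (g : RationalFunction Γ),
      (∀ e ∈ Cr Γ S, LiesOn Γ e (P e) (r e) ∧ f.eFun e (r e) = c ∧
        (Gy.X e = 0 → ∀ w, w ∉ S → f.vVal w = c → Γ.Incident e w → P e = Sum.inl w)) ∧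
      ∀ p, Dx p = ∑ e ∈ Cr Γ S, unitDiv Γ (P e) p + ratDiv g p := by
  choose δ hδ using trunc_edge Gx Gy f hf S hC c hS hS'
  have hP : ∀ e, ∃ P r, e ∈ Cr Γ S → LiesOn Γ e P r ∧ δ e = unitDiv Γ P ∧ f.eFun e r = c ∧
    (Gy.X e = 0 → ∀ w, w ∉ S → f.vVal w = c → Γ.Incident e w → P = Sum.inl w) := by
    intro e
    by_cases he : e ∈ Cr Γ S
    · obtain ⟨P, r, h⟩ := (hδ e).hcr he
      exact ⟨P, r, fun _ => h⟩
    · exact ⟨Sum.inl (Γ.src e), 0, fun h => (he h).elim⟩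
  choose P r hPr using hP
  let g : RationalFunction Γ :=
    { vVal := fun v => min (f.vVal v) c
      eFun := fun e u => min (f.eFun e u) c
      pl := fun e => (hδ e).loc.pl (Γ.len_pos e).le
      srcVal := fun e => by rw [f.srcVal]
      tgtVal := fun e => by rw [f.tgtVal] }
  refine ⟨P, r, g, fun e he => ⟨(hPr e he).1, (hPr e he).2.2.1, (hPr e he).2.2.2⟩, fun p => ?_⟩
  have hsum : ∑ e ∈ Cr Γ S, unitDiv Γ (P e) p = ∑ e, δ e p := by
    rw [← Finset.sum_subset (Finset.subset_univ (Cr Γ S))]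
    · refine Finset.sum_congr rfl fun e he => ?_
      rw [(hPr e he).2.1]
    · intro e _ he
      rw [(hδ e).hncr he]; rfl
  rw [hsum]
  rcases p with v | ⟨e, t⟩
  · have h1 : ratDiv g (Sum.inl v) = ∑ e, vc Γ (fun u => min (f.eFun e u) c) e v := rfl
    have h2 : ratDiv f (Sum.inl v) = ∑ e, vc Γ (f.eFun e) e v := rfl
    rw [h1, ← Finset.sum_add_distrib]
    by_cases hv : v ∈ S
    · rw [hf, hC.y_in v hv, zero_add, h2]
      refine Finset.sum_congr rfl fun e _ => ?_
      rw [((hδ e).hin v hv).1, ((hδ e).hin v hv).2, zero_add]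
    · rw [hC.x_out v hv]
      symm
      refine Finset.sum_eq_zero fun e _ => ?_
      rw [add_comm]; exact (hδ e).hout v hv
  · have h1 : ratDiv g (Sum.inr ⟨e, t⟩) = slopeR (fun u => min (f.eFun e u) c) t.1 +
      slopeL (fun u => min (f.eFun e u) c) t.1 := rfl
    rw [h1, Finset.sum_eq_single e, ← (hδ e).hedg t]
    · ring
    · intro e' _ hne
      exact (hδ e').hoth e t hne.symm
    · simp

end TriCut
end

section
open scoped Classical
open MetricGraphModel

namespace TriCut

variable {Γ : MetricGraphModel} {D Dx Dy : Divisor Γ}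

lemma liesOn_interior {e e' : Γ.E} {p : Γ.Pt} {s : ℝ} (h : LiesOn Γ e p s)
    (h' : interiorOf Γ e' p) : e' = e := by
  obtain ⟨q, rfl⟩ := h'
  rcases h with ⟨h, -⟩ | ⟨h, -⟩ | ⟨h, h1⟩
  · simp at h
  · simp at h
  · simp only [Sum.inr.injEq, Sigma.mk.injEq] at h1
    exact h1.1

lemma linEquiv_trans {A B C : Divisor Γ} (h : LinEquiv Γ A B) (h' : LinEquiv Γ B C) :
    LinEquiv Γ A C := by
  obtain ⟨f, hf⟩ := h
  obtain ⟨g, hg⟩ := h'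
  exact ⟨rAdd f g, fun p => by rw [ratDiv_add, hf, hg]; ring⟩

lemma linEquiv_symm {A B : Divisor Γ} (h : LinEquiv Γ A B) : LinEquiv Γ B A := by
  obtain ⟨f, hf⟩ := h
  exact ⟨rNeg f, fun p => by rw [ratDiv_neg, hf]; ring⟩

lemma trunc_rep (Gx : Good Γ Dx) (Gy : Good Γ Dy)
    (f : RationalFunction Γ) (hf : ∀ p, Dx p = Dy p + ratDiv f p) (S : Finset Γ.V)
    (hC : CutConcl Γ Dx Dy Gx Gy f S) (c : ℝ) (hS : ∀ v ∈ S, f.vVal v < c)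
    (hS' : ∀ v, v ∉ S → c ≤ f.vVal v) (hD : LinEquiv Γ D Dx) :
    ∃ (P : Γ.E → Γ.Pt) (r : Γ.E → ℝ) (E : Divisor Γ),
      (∀ e ∈ Cr Γ S, LiesOn Γ e (P e) (r e) ∧ f.eFun e (r e) = c ∧ E (P e) ≠ 0 ∧
        (Gy.X e = 0 → ∀ w, w ∉ S → f.vVal w = c → Γ.Incident e w → P e = Sum.inl w)) ∧
      (∀ p, E p ≠ 0 → ∃ e ∈ Cr Γ S, p = P e) ∧
      LinEquiv Γ D E ∧ Nonempty (Good Γ E) ∧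
      (∀ e ∈ Cr Γ S, ∀ w, P e = Sum.inl w → AdmissibleRep Γ D w E) := by
  obtain ⟨P, r, g, hP, hg⟩ := trunc_div Gx Gy f hf S hC c hS hS'
  have hDE : LinEquiv Γ D (fun p => ∑ e ∈ Cr Γ S, unitDiv Γ (P e) p) :=
    linEquiv_trans hD ⟨g, hg⟩
  have hu : ∀ e p, 0 ≤ unitDiv Γ (P e) p := by
    intro e p; simp only [unitDiv]; split_ifs <;> simp
  have hsame : ∀ e ∈ Cr Γ S, ∀ e' ∈ Cr Γ S, e ≠ e' → ¬ SameEdgeInterior Γ (P e) (P e') := by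
    rintro e he e' he' hne ⟨e'', h1, h2⟩
    exact hne ((liesOn_interior (hP e he).1 h1).symm.trans (liesOn_interior (hP e' he').1 h2))
  obtain ⟨e1, e2, e3, h12, h13, h23, hCr⟩ := Finset.card_eq_three.1 hC.card
  have m1 : e1 ∈ Cr Γ S := by simp [hCr]
  have m2 : e2 ∈ Cr Γ S := by simp [hCr]
  have m3 : e3 ∈ Cr Γ S := by simp [hCr]
  have hsum : ∀ z, ∑ e ∈ Cr Γ S, unitDiv Γ (P e) z =
      unitDiv Γ (P e1) z + unitDiv Γ (P e2) z + unitDiv Γ (P e3) z := by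
    intro z
    rw [hCr, Finset.sum_insert (by simp [h12, h13]), Finset.sum_insert (by simp [h23]),
      Finset.sum_singleton, add_assoc]
  refine ⟨P, r, _, fun e he => ⟨(hP e he).1, (hP e he).2.1, ?_, (hP e he).2.2⟩, ?_, hDE, ?_, ?_⟩
  · have h1 := Finset.single_le_sum (f := fun e' => unitDiv Γ (P e') (P e)) (fun e' _ => hu e' _) he
    have h2 : unitDiv Γ (P e) (P e) = 1 := by simp [unitDiv]
    rw [h2] at h1
    exact ne_of_gt (by linarith)
  · intro p hp
    obtain ⟨e, he, h⟩ := Finset.exists_ne_zero_of_sum_ne_zero hp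
    refine ⟨e, he, ?_⟩
    by_contra hne
    simp [unitDiv, hne] at h
  · refine good_of_points ![P e1, P e2, P e3] (fun z => ?_) ?_
    · rw [hsum]; simp [Fin.sum_univ_three]
    · intro i j hij
      fin_cases i <;> fin_cases j <;> simp at hij ⊢
      · exact hsame _ m1 _ m2 h12
      · exact hsame _ m1 _ m3 h13
      · exact hsame _ m2 _ m1 h12.symm
      · exact hsame _ m2 _ m3 h23
      · exact hsame _ m3 _ m1 h13.symm
      · exact hsame _ m3 _ m2 h23.symm
  · intro e he w hw
    refine ⟨hDE, ?_⟩
    rw [hCr] at he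
    simp only [Finset.mem_insert, Finset.mem_singleton] at he
    rcases he with rfl | rfl | rfl
    · exact ⟨P e2, P e3, by funext z; rw [hsum, hw], hsame _ m2 _ m3 h23⟩
    · exact ⟨P e1, P e3, by funext z; rw [hsum, hw]; ring, hsame _ m1 _ m3 h13⟩
    · exact ⟨P e1, P e2, by funext z; rw [hsum, hw]; ring, hsame _ m1 _ m2 h12⟩

/-- The values of `f` along a connecting segment. -/
lemma seg_levels (h3 : Γ.ThreeEdgeConnected) (Gx : Good Γ Dx) (Gy : Good Γ Dy)
    (f : RationalFunction Γ) (hf : ∀ p, Dx p = Dy p + ratDiv f p) {u w : Γ.V}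
    (hu : ∀ v, f.vVal u ≤ f.vVal v) (hw : ∀ v, f.vVal v ≤ f.vVal w) (huw : f.vVal u < f.vVal w)
    {e : Γ.E} {s t : ℝ} (h : ConnSeg Γ D Dx Dy e s t) :
    0 ≤ s ∧ t ≤ Γ.len e ∧
    ((f.vVal (Γ.src e) = f.vVal u ∧ f.vVal (Γ.tgt e) = f.vVal w ∧ f.eFun e s = f.vVal u ∧
      f.eFun e t = f.vVal w) ∨
    (f.vVal (Γ.src e) = f.vVal w ∧ f.vVal (Γ.tgt e) = f.vVal u ∧ f.eFun e s = f.vVal w ∧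
      f.eFun e t = f.vVal u)) := by
  obtain ⟨hst, p, q, hp, hq, hpq, -⟩ := h
  have hE := edgeForm Gx Gy f hf e
  have b1 := liesOn_bounds hp
  have b2 := liesOn_bounds hq
  refine ⟨b1.1, b2.2, ?_⟩
  have k1 := hu (Γ.src e)
  have k2 := hu (Γ.tgt e)
  have k3 := hw (Γ.src e)
  have k4 := hw (Γ.tgt e)
  rcases hpq with ⟨h1, h2⟩ | ⟨h1, h2⟩
  · have e1 := (level_x h3 Gx Gy f hf hu huw p h1).1
    have e2 := level_y h3 Gx Gy f hf hw huw q h2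
    rw [ratEval_liesOn f hp] at e1
    rw [ratEval_liesOn f hq] at e2
    left
    rcases le_total (f.eFun e 0) (f.eFun e (Γ.len e)) with h | h
    · have m1 := hE.mono h le_rfl b1.1 b1.2
      have m2 := hE.mono h b2.1 b2.2 le_rfl
      rw [f.srcVal] at m1
      rw [f.tgtVal] at m2
      exact ⟨by linarith, by linarith, e1, e2⟩
    · have m1 := hE.anti h b1.1 hst.le b2.2
      linarith
  · have e1 := (level_x h3 Gx Gy f hf hu huw q h2).1
    have e2 := level_y h3 Gx Gy f hf hw huw p h1
    rw [ratEval_liesOn f hq] at e1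
    rw [ratEval_liesOn f hp] at e2
    right
    rcases le_total (f.eFun e 0) (f.eFun e (Γ.len e)) with h | h
    · have m1 := hE.mono h b1.1 hst.le b2.2
      linarith
    · have m1 := hE.anti h le_rfl b1.1 b1.2
      have m2 := hE.anti h b2.1 b2.2 le_rfl
      rw [f.srcVal] at m1
      rw [f.tgtVal] at m2
      exact ⟨by linarith, by linarith, e2, e1⟩

lemma two_levels (h3 : Γ.ThreeEdgeConnected) (Gx : Good Γ Dx) (Gy : Good Γ Dy)
    (f : RationalFunction Γ) (hf : ∀ p, Dx p = Dy p + ratDiv f p) {u w : Γ.V}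
    (hu : ∀ v, f.vVal u ≤ f.vVal v) (hw : ∀ v, f.vVal v ≤ f.vVal w) (huw : f.vVal u < f.vVal w)
    (hD : LinEquiv Γ D Dx)
    {e : Γ.E} {s t : ℝ} (h : ConnSeg Γ D Dx Dy e s t) (v : Γ.V) :
    f.vVal v = f.vVal u ∨ f.vVal v = f.vVal w := by
  by_contra hv
  push Not at hv
  have hv1 : f.vVal u < f.vVal v := lt_of_le_of_ne (hu v) (Ne.symm hv.1)
  have hv2 : f.vVal v < f.vVal w := lt_of_le_of_ne (hw v) hv.2
  let S : Finset Γ.V := Finset.univ.filter fun a => f.vVal a < f.vVal v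
  let S' : Finset Γ.V := Finset.univ.filter fun a => f.vVal a ≤ f.vVal v
  let T : Finset Γ.V := Finset.univ.filter fun a => f.vVal a = f.vVal v
  have hS : ∀ a, a ∈ S ↔ f.vVal a < f.vVal v := by simp [S]
  have hS' : ∀ a, a ∈ S' ↔ f.vVal a ≤ f.vVal v := by simp [S']
  have hT : ∀ a, a ∈ T ↔ f.vVal a = f.vVal v := by simp [T]
  have hC := cut_lemma h3 Gx Gy f hf S (u := u) (w := w) ((hS u).2 hv1)
    (fun h => by rw [hS] at h; linarith) (fun a b ha hb => by rw [hS] at ha hb; linarith)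
  have hC' := cut_lemma h3 Gx Gy f hf S' (u := u) (w := w) ((hS' u).2 hv1.le)
    (fun h => by rw [hS'] at h; linarith) (fun a b ha hb => by rw [hS'] at ha hb; linarith)
  have hex : ∃ e1 ∈ Cr Γ S, ∃ w1, f.vVal w1 = f.vVal v ∧ Γ.Incident e1 w1 := by
    by_contra hno
    push Not at hno
    have hsub : Cr Γ S ⊆ Cr Γ S' := by
      intro e1 he1
      have n1 : ¬ f.vVal (Γ.src e1) = f.vVal v := fun h => hno e1 he1 (Γ.src e1) h (Or.inl rfl)
      have n2 : ¬ f.vVal (Γ.tgt e1) = f.vVal v := fun h => hno e1 he1 (Γ.tgt e1) h (Or.inr rfl)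
      rw [mem_Cr, hS, hS] at he1
      rw [mem_Cr, hS', hS', le_iff_lt_or_eq, le_iff_lt_or_eq]
      simp only [n1, n2, or_false]
      exact he1
    have heq : Cr Γ S = Cr Γ S' :=
      Finset.eq_of_subset_of_card_le hsub (by rw [hC.card, hC'.card])
    have hTc := cut_ge h3 (S := T) (u := v) (w := u) ((hT v).2 rfl)
      (fun h => by rw [hT] at h; linarith)
    obtain ⟨e1, he1⟩ := Finset.card_pos.1 (by omega : 0 < (Cr Γ T).card)
    have hmem : e1 ∈ Cr Γ S := by
      by_contra hn
      have hn' : e1 ∉ Cr Γ S' := heq ▸ hn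
      rw [mem_Cr, not_not, hS, hS] at hn
      rw [mem_Cr, not_not, hS', hS'] at hn'
      rw [mem_Cr, hT, hT] at he1
      apply he1
      constructor
      · intro h
        have h1 := hn'.1 h.le
        exact le_antisymm h1 (not_lt.1 fun h2 => by linarith [hn.2 h2])
      · intro h
        have h1 := hn'.2 h.le
        exact le_antisymm h1 (not_lt.1 fun h2 => by linarith [hn.1 h2])
    have hone : f.vVal (Γ.src e1) = f.vVal v ∨ f.vVal (Γ.tgt e1) = f.vVal v := by
      rw [mem_Cr, hT, hT] at he1
      tauto
    rcases hone with h | h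
    · exact hno e1 hmem _ h (Or.inl rfl)
    · exact hno e1 hmem _ h (Or.inr rfl)
  obtain ⟨e1, he1, w1, hw1, hinc⟩ := hex
  have hw1S : w1 ∉ S := fun h => by rw [hS] at h; linarith
  have hY : Gy.X e1 = 0 := by
    rw [mem_Cr, hS, hS] at he1
    refine hC'.y_edge e1 ?_ ?_
    · rw [hS']
      rcases hinc with h | h
      · rw [h]; exact hw1.le
      · rw [h, hw1] at he1
        simp only [lt_irrefl, iff_false, not_not] at he1
        exact he1.le
    · rw [hS']
      rcases hinc with h | h
      · rw [h, hw1] at he1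
        simp only [lt_irrefl, false_iff, not_not] at he1
        exact he1.le
      · rw [h]; exact hw1.le
  obtain ⟨P, r, E, hP, -, -, -, hadm⟩ := trunc_rep Gx Gy f hf S hC (f.vVal v)
    (fun a ha => (hS a).1 ha) (fun a ha => by rw [hS] at ha; exact not_lt.1 ha) hD
  have hAdm := hadm e1 he1 w1 ((hP e1 he1).2.2.2 hY w1 hw1S hw1 hinc)
  obtain ⟨b1, b2, hlev⟩ := seg_levels h3 Gx Gy f hf hu hw huw h
  have hcr : e ∈ Cr Γ S := by
    rw [mem_Cr, hS, hS]
    rcases hlev with ⟨k1, k2, -⟩ | ⟨k1, k2, -⟩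
    · rw [k1, k2]; intro h; have := h.1 hv1; linarith
    · rw [k1, k2]; intro h; have := h.2 hv1; linarith
  obtain ⟨l1, l2, l3, -⟩ := hP e hcr
  have hE := edgeForm Gx Gy f hf e
  have lb := liesOn_bounds l1
  have hst := h.1
  obtain ⟨-, -, -, -, -, -, hns⟩ := h
  refine hns (r e) ?_ ?_ (P e) l1 (Or.inr ⟨w1, E, hAdm, l3⟩)
  · by_contra hcon
    push Not at hcon
    rcases hlev with ⟨k1, k2, k3, k4⟩ | ⟨k1, k2, k3, k4⟩
    · have := hE.mono (by rw [f.srcVal, f.tgtVal]; linarith) lb.1 hcon (by linarith)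
      linarith
    · have := hE.anti (by rw [f.srcVal, f.tgtVal]; linarith) lb.1 hcon (by linarith)
      linarith
  · by_contra hcon
    push Not at hcon
    rcases hlev with ⟨k1, k2, k3, k4⟩ | ⟨k1, k2, k3, k4⟩
    · have := hE.mono (by rw [f.srcVal, f.tgtVal]; linarith) (by linarith) hcon lb.2
      linarith
    · have := hE.anti (by rw [f.srcVal, f.tgtVal]; linarith) (by linarith) hcon lb.2
      linarith

end TriCut
end

section
open scoped Classical
open MetricGraphModel

namespace TriCut

variable {Γ : MetricGraphModel} {D Dx Dy : Divisor Γ}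

lemma liesOn_unique {e : Γ.E} {p q : Γ.Pt} {r : ℝ} (h : LiesOn Γ e p r) (h' : LiesOn Γ e q r) :
    p = q := by
  have := Γ.len_pos e
  rcases h with ⟨rfl, h1⟩ | ⟨rfl, h1⟩ | ⟨h1, rfl⟩
  · rcases h' with ⟨rfl, h2⟩ | ⟨rfl, h2⟩ | ⟨h2, rfl⟩
    · rfl
    · exfalso; linarith
    · exfalso; linarith [h2.1]
  · rcases h' with ⟨rfl, h2⟩ | ⟨rfl, h2⟩ | ⟨h2, rfl⟩
    · exfalso; linarith
    · rfl
    · exfalso; linarith [h2.2]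
  · rcases h' with ⟨rfl, h2⟩ | ⟨rfl, h2⟩ | ⟨h2, rfl⟩
    · exfalso; linarith [h1.1]
    · exfalso; linarith [h1.2]
    · rfl

lemma min_slope_src (Gx : Good Γ Dx) (Gy : Good Γ Dy)
    (f : RationalFunction Γ) (hf : ∀ p, Dx p = Dy p + ratDiv f p) (e : Γ.E)
    (hv : ∀ a, f.vVal (Γ.src e) ≤ f.vVal a) : 0 ≤ slopeR (f.eFun e) 0 := by
  have hE := edgeForm Gx Gy f hf e
  rcases (hv (Γ.tgt e)).eq_or_lt with h | h
  · rw [(hE.const (by rw [f.srcVal, f.tgtVal, h])).1]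
  · exact (hE.incr (by rw [f.srcVal, f.tgtVal]; exact h)).1

lemma min_slope_tgt (Gx : Good Γ Dx) (Gy : Good Γ Dy)
    (f : RationalFunction Γ) (hf : ∀ p, Dx p = Dy p + ratDiv f p) (e : Γ.E)
    (hv : ∀ a, f.vVal (Γ.tgt e) ≤ f.vVal a) : 0 ≤ slopeL (f.eFun e) (Γ.len e) := by
  have hE := edgeForm Gx Gy f hf e
  rw [hE.slope1]
  rcases (hv (Γ.src e)).eq_or_lt with h | h
  · have := hE.const (by rw [f.srcVal, f.tgtVal, h])
    rw [this.1, this.2.1]; omega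
  · exact (hE.rev.incr (by simp only [sub_zero, sub_self]; rw [f.srcVal, f.tgtVal]; exact h)).1

lemma vc_nonneg (Gx : Good Γ Dx) (Gy : Good Γ Dy)
    (f : RationalFunction Γ) (hf : ∀ p, Dx p = Dy p + ratDiv f p) (v : Γ.V)
    (hv : ∀ a, f.vVal v ≤ f.vVal a) (e : Γ.E) : 0 ≤ vc Γ (f.eFun e) e v := by
  simp only [vc]
  have h1 : 0 ≤ (if Γ.src e = v then slopeR (f.eFun e) 0 else 0) := by
    split_ifs with h
    · exact min_slope_src Gx Gy f hf e (by rw [h]; exact hv)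
    · exact le_rfl
  have h2 : 0 ≤ (if Γ.tgt e = v then slopeL (f.eFun e) (Γ.len e) else 0) := by
    split_ifs with h
    · exact min_slope_tgt Gx Gy f hf e (by rw [h]; exact hv)
    · exact le_rfl
  omega

lemma dx_src (Gx : Good Γ Dx) (Gy : Good Γ Dy)
    (f : RationalFunction Γ) (hf : ∀ p, Dx p = Dy p + ratDiv f p) (e : Γ.E)
    (hv : ∀ a, f.vVal (Γ.src e) ≤ f.vVal a) (h1 : slopeR (f.eFun e) 0 = 1) :
    Dx (Sum.inl (Γ.src e)) ≠ 0 := by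
  have h2 : ratDiv f (Sum.inl (Γ.src e)) = ∑ e', vc Γ (f.eFun e') e' (Γ.src e) := rfl
  have h3 := Finset.single_le_sum (f := fun e' => vc Γ (f.eFun e') e' (Γ.src e))
    (fun e' _ => vc_nonneg Gx Gy f hf _ hv e') (Finset.mem_univ e)
  have h4 : 1 ≤ vc Γ (f.eFun e) e (Γ.src e) := by
    simp only [vc]
    rw [if_pos trivial, h1]
    split_ifs with h
    · have := min_slope_tgt Gx Gy f hf e (by rw [h]; exact hv)
      omega
    · omega
  have h5 := Gy.hv (Γ.src e)
  rw [hf, h2]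
  have h6 : 1 ≤ ∑ e', vc Γ (f.eFun e') e' (Γ.src e) := h4.trans h3
  omega

lemma dx_tgt (Gx : Good Γ Dx) (Gy : Good Γ Dy)
    (f : RationalFunction Γ) (hf : ∀ p, Dx p = Dy p + ratDiv f p) (e : Γ.E)
    (hv : ∀ a, f.vVal (Γ.tgt e) ≤ f.vVal a) (h1 : slopeL (f.eFun e) (Γ.len e) = 1) :
    Dx (Sum.inl (Γ.tgt e)) ≠ 0 := by
  have h2 : ratDiv f (Sum.inl (Γ.tgt e)) = ∑ e', vc Γ (f.eFun e') e' (Γ.tgt e) := rfl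
  have h3 := Finset.single_le_sum (f := fun e' => vc Γ (f.eFun e') e' (Γ.tgt e))
    (fun e' _ => vc_nonneg Gx Gy f hf _ hv e') (Finset.mem_univ e)
  have h4 : 1 ≤ vc Γ (f.eFun e) e (Γ.tgt e) := by
    simp only [vc]
    rw [if_pos trivial, h1]
    split_ifs with h
    · have := min_slope_src Gx Gy f hf e (by rw [h]; exact hv)
      omega
    · omega
  have h5 := Gy.hv (Γ.tgt e)
  rw [hf, h2]
  have h6 : 1 ≤ ∑ e', vc Γ (f.eFun e') e' (Γ.tgt e) := h4.trans h3
  omega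

lemma slopeL_neg (f : RationalFunction Γ) (e : Γ.E) :
    slopeL ((rNeg f).eFun e) (Γ.len e) = - slopeL (f.eFun e) (Γ.len e) :=
  ((rHasL f e (Γ.len_pos e) le_rfl).mul (-1)).slope.trans (by ring)

lemma slopeR_neg (f : RationalFunction Γ) (e : Γ.E) :
    slopeR ((rNeg f).eFun e) 0 = - slopeR (f.eFun e) 0 :=
  ((rHasR f e le_rfl (Γ.len_pos e)).mul (-1)).slope.trans (by ring)

lemma rNeg_v (f : RationalFunction Γ) (v : Γ.V) : (rNeg f).vVal v = - f.vVal v := by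
  simp [rNeg]

lemma rNeg_e (f : RationalFunction Γ) (e : Γ.E) (r : ℝ) :
    (rNeg f).eFun e r = - f.eFun e r := by
  simp [rNeg]

/-- The segment of an increasing edge. -/
structure SegUp (Γ : MetricGraphModel) (Dx Dy : Divisor Γ) (f : RationalFunction Γ) (e : Γ.E)
    (s t : ℝ) : Prop where
  h0 : 0 ≤ s
  hst : s < t
  h1 : t ≤ Γ.len e
  hlen : t - s = f.vVal (Γ.tgt e) - f.vVal (Γ.src e)
  lo : ∀ r, 0 ≤ r → r ≤ s → f.eFun e r = f.vVal (Γ.src e)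
  hi : ∀ r, t ≤ r → r ≤ Γ.len e → f.eFun e r = f.vVal (Γ.tgt e)
  mid : ∀ r, s < r → r < t → f.vVal (Γ.src e) < f.eFun e r ∧ f.eFun e r < f.vVal (Γ.tgt e)
  inj : ∀ r r', 0 ≤ r' → r' ≤ Γ.len e → s < r → r < t → f.eFun e r' = f.eFun e r → r' = r
  ps : ∀ p, LiesOn Γ e p s → Dx p ≠ 0
  pt : ∀ p, LiesOn Γ e p t → Dy p ≠ 0
  sl0 : slopeR (f.eFun e) 0 = if s = 0 then 1 else 0
  sl1 : slopeL (f.eFun e) (Γ.len e) = - if t = Γ.len e then 1 else 0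
  ix : ∀ r, Dx (Sum.inr ⟨e, r⟩) ≠ 0 → r.1 = s
  iy : ∀ r, Dy (Sum.inr ⟨e, r⟩) ≠ 0 → r.1 = t

lemma Good.hint_ne (G : Good Γ D) {e : Γ.E} {r : {t : ℝ // 0 < t ∧ t < Γ.len e}}
    (h : D (Sum.inr ⟨e, r⟩) ≠ 0) : G.X e = 1 ∧ r.1 = G.pos e := by
  rw [G.hedg] at h
  by_contra h'
  simp [h'] at h

lemma seg_up (Gx : Good Γ Dx) (Gy : Good Γ Dy)
    (f : RationalFunction Γ) (hf : ∀ p, Dx p = Dy p + ratDiv f p) (e : Γ.E)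
    (hmin : ∀ a, f.vVal (Γ.src e) ≤ f.vVal a) (hmax : ∀ a, f.vVal a ≤ f.vVal (Γ.tgt e))
    (hlt : f.vVal (Γ.src e) < f.vVal (Γ.tgt e)) (h1 : slopeR (f.eFun e) 0 + Gx.X e = 1) :
    ∃ s t, SegUp Γ Dx Dy f e s t := by
  have hE := edgeForm Gx Gy f hf e
  have hL := Γ.len_pos e
  obtain ⟨s, t, h0, hst, htL, hx1, hx0, hy1, hy0, hform⟩ := hE.ramp
    (by rw [f.srcVal, f.tgtVal]; exact hlt) h1
  have hsl1 := hE.slope1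
  rw [f.srcVal] at hform
  have hlow : ∀ r, 0 ≤ r → r ≤ s → f.eFun e r = f.vVal (Γ.src e) := by
    intro r h2 h3
    rw [hform r h2 (by linarith), max_eq_left (by linarith), max_eq_left (by linarith)]; ring
  have hmid : ∀ r, s ≤ r → r ≤ t → f.eFun e r = f.vVal (Γ.src e) + (r - s) := by
    intro r h2 h3
    rw [hform r (by linarith) (by linarith), max_eq_right (by linarith), max_eq_left (by linarith)]
    ring
  have hhi : ∀ r, t ≤ r → r ≤ Γ.len e → f.eFun e r = f.vVal (Γ.src e) + (t - s) := by
    intro r h2 h3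
    rw [hform r (by linarith) (by linarith), max_eq_right (by linarith), max_eq_right (by linarith)]
    ring
  have htg : f.vVal (Γ.tgt e) = f.vVal (Γ.src e) + (t - s) := by
    rw [← f.tgtVal]; exact hhi _ htL le_rfl
  have hs0 : Gx.X e = 1 → s ≠ 0 := fun h => by
    rw [hx1 h]; exact (Gx.hpos e h).1.ne'
  have ht0 : Gy.X e = 1 → t ≠ Γ.len e := fun h => by
    rw [hy1 h]; exact (Gy.hpos e h).2.ne
  refine ⟨s, t, h0, hst, htL, by rw [htg]; ring, hlow, fun r a b => by rw [htg]; exact hhi r a b,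
    fun r a b => ?_, fun r r' a b c d h => ?_, fun p hp => ?_, fun p hp => ?_, ?_, ?_,
    fun r hr => ?_, fun r hr => ?_⟩
  · rw [hmid r a.le b.le, htg]; constructor <;> linarith
  · rw [hmid r c.le d.le] at h
    rcases le_total r' s with k | k
    · rw [hlow r' a k] at h; linarith
    · rcases le_total r' t with k' | k'
      · rw [hmid r' k k'] at h; linarith
      · rw [hhi r' k' b] at h; linarith
  · rcases Gx.h01 e with hX | hX
    · have hs : s = 0 := hx0 hX
      have : p = Sum.inl (Γ.src e) := liesOn_unique hp (Or.inl ⟨rfl, hs⟩)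
      rw [this]
      exact dx_src Gx Gy f hf e hmin (by omega)
    · have hs : s = Gx.pos e := hx1 hX
      have hb := Gx.hpos e hX
      rw [← hs] at hb
      have : p = Sum.inr ⟨e, s, hb⟩ := liesOn_unique hp (Or.inr (Or.inr ⟨hb, rfl⟩))
      rw [this, Gx.hedg, if_pos ⟨hX, hs⟩]
      exact one_ne_zero
  · rcases Gy.h01 e with hY | hY
    · have ht : t = Γ.len e := hy0 hY
      have : p = Sum.inl (Γ.tgt e) := liesOn_unique hp (Or.inr (Or.inl ⟨rfl, ht⟩))
      rw [this]
      exact dx_tgt Gy Gx (rNeg f) (hf_neg f hf) e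
        (fun a => by rw [rNeg_v, rNeg_v]; linarith [hmax a]) (by rw [slopeL_neg]; omega)
    · have ht : t = Gy.pos e := hy1 hY
      have hb := Gy.hpos e hY
      rw [← ht] at hb
      have : p = Sum.inr ⟨e, t, hb⟩ := liesOn_unique hp (Or.inr (Or.inr ⟨hb, rfl⟩))
      rw [this, Gy.hedg, if_pos ⟨hY, ht⟩]
      exact one_ne_zero
  · rcases Gx.h01 e with hX | hX
    · rw [if_pos (hx0 hX)]; omega
    · rw [if_neg (hs0 hX)]; omega
  · rcases Gy.h01 e with hY | hY
    · rw [if_pos (hy0 hY)]; omega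
    · rw [if_neg (ht0 hY)]; omega
  · have := Gx.hint_ne hr
    rw [hx1 this.1]; exact this.2
  · have := Gy.hint_ne hr
    rw [hy1 this.1]; exact this.2

/-- Orientation free description of the crossing segment of an edge. -/
structure Seg (Γ : MetricGraphModel) (Dx Dy : Divisor Γ) (f : RationalFunction Γ)
    (S : Finset Γ.V) (m M : ℝ) (e : Γ.E) (s t : ℝ) : Prop where
  h0 : 0 ≤ s
  hst : s < t
  h1 : t ≤ Γ.len e
  hlen : t - s = M - m
  lo : ∀ r, 0 ≤ r → r ≤ s → f.eFun e r = f.vVal (Γ.src e)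
  hi : ∀ r, t ≤ r → r ≤ Γ.len e → f.eFun e r = f.vVal (Γ.tgt e)
  mid : ∀ r, s < r → r < t → m < f.eFun e r ∧ f.eFun e r < M
  inj : ∀ r r', 0 ≤ r' → r' ≤ Γ.len e → s < r → r < t → f.eFun e r' = f.eFun e r → r' = r
  dir : (Γ.src e ∈ S ∧ Γ.tgt e ∉ S ∧ (∀ p, LiesOn Γ e p s → Dx p ≠ 0) ∧
      (∀ p, LiesOn Γ e p t → Dy p ≠ 0) ∧ (slopeR (f.eFun e) 0 = if s = 0 then 1 else 0) ∧
      (∀ r, Dx (Sum.inr ⟨e, r⟩) ≠ 0 → r.1 = s)) ∨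
    (Γ.src e ∉ S ∧ Γ.tgt e ∈ S ∧ (∀ p, LiesOn Γ e p s → Dy p ≠ 0) ∧
      (∀ p, LiesOn Γ e p t → Dx p ≠ 0) ∧
      (slopeL (f.eFun e) (Γ.len e) = if t = Γ.len e then 1 else 0) ∧
      (∀ r, Dx (Sum.inr ⟨e, r⟩) ≠ 0 → r.1 = t))

/-- The set-up after the two-level reduction. -/
structure Setup (Γ : MetricGraphModel) (Dx Dy : Divisor Γ) (Gx : Good Γ Dx) (Gy : Good Γ Dy)
    (f : RationalFunction Γ) (S : Finset Γ.V) (m M : ℝ) : Prop where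
  hf : ∀ p, Dx p = Dy p + ratDiv f p
  hm : ∀ v ∈ S, f.vVal v = m
  hM : ∀ v, v ∉ S → f.vVal v = M
  hlt : m < M
  hC : CutConcl Γ Dx Dy Gx Gy f S

variable {Gx : Good Γ Dx} {Gy : Good Γ Dy} {f : RationalFunction Γ} {S : Finset Γ.V} {m M : ℝ}

lemma Setup.val (h : Setup Γ Dx Dy Gx Gy f S m M) (v : Γ.V) : f.vVal v = m ∨ f.vVal v = M := by
  by_cases hv : v ∈ S
  · exact Or.inl (h.hm v hv)
  · exact Or.inr (h.hM v hv)

lemma Setup.seg (h : Setup Γ Dx Dy Gx Gy f S m M) (e : Γ.E) (he : e ∈ Cr Γ S) :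
    ∃ s t, Seg Γ Dx Dy f S m M e s t := by
  have hlt := h.hlt
  have hge : ∀ a, m ≤ f.vVal a := fun a => by rcases h.val a with k | k <;> linarith
  have hle : ∀ a, f.vVal a ≤ M := fun a => by rcases h.val a with k | k <;> linarith
  rw [mem_Cr] at he
  by_cases hs : Γ.src e ∈ S
  · have ht : Γ.tgt e ∉ S := fun ht => he (by simp [hs, ht])
    have e1 := h.hm _ hs
    have e2 := h.hM _ ht
    obtain ⟨s, t, g⟩ := seg_up Gx Gy f h.hf e (by rw [e1]; exact hge) (by rw [e2]; exact hle)
      (by rw [e1, e2]; exact hlt) (h.hC.src_cut e hs ht)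
    refine ⟨s, t, g.h0, g.hst, g.h1, by rw [g.hlen, e1, e2], g.lo, g.hi,
      fun r a b => by have := g.mid r a b; rw [e1, e2] at this; exact this, g.inj,
      Or.inl ⟨hs, ht, g.ps, g.pt, g.sl0, g.ix⟩⟩
  · have ht : Γ.tgt e ∈ S := by by_contra ht; exact he (by simp [hs, ht])
    have e1 := h.hM _ hs
    have e2 := h.hm _ ht
    have hE := (edgeForm Gx Gy f h.hf e).slope1
    have h1 := h.hC.tgt_cut e hs ht
    obtain ⟨s, t, g⟩ := seg_up Gy Gx (rNeg f) (hf_neg f h.hf) e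
      (fun a => by rw [rNeg_v, rNeg_v, e1]; linarith [hle a])
      (fun a => by rw [rNeg_v, rNeg_v, e2]; linarith [hge a])
      (by rw [rNeg_v, rNeg_v, e1, e2]; linarith) (by rw [slopeR_neg]; omega)
    refine ⟨s, t, g.h0, g.hst, g.h1, by rw [g.hlen, rNeg_v, rNeg_v, e1, e2]; ring,
      fun r a b => ?_, fun r a b => ?_, fun r a b => ?_, fun r r' a b c d hh => ?_,
      Or.inr ⟨hs, ht, g.ps, g.pt, ?_, g.iy⟩⟩
    · have := g.lo r a b; rw [rNeg_v, rNeg_e] at this; linarith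
    · have := g.hi r a b; rw [rNeg_v, rNeg_e] at this; linarith
    · have := g.mid r a b
      rw [rNeg_v, rNeg_e, rNeg_v, e1, e2] at this
      constructor <;> linarith [this.1, this.2]
    · exact g.inj r r' a b c d (by rw [rNeg_e, rNeg_e, hh])
    · have := g.sl1
      rw [slopeL_neg] at this
      exact neg_injective this

end TriCut
end

section
open scoped Classical
open MetricGraphModel

namespace TriCut

variable {Γ : MetricGraphModel} {D Dx Dy : Divisor Γ}
variable {Gx : Good Γ Dx} {Gy : Good Γ Dy} {f : RationalFunction Γ} {S : Finset Γ.V} {m M : ℝ}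

lemma exists_liesOn (e : Γ.E) {r : ℝ} (h0 : 0 ≤ r) (h1 : r ≤ Γ.len e) : ∃ p, LiesOn Γ e p r := by
  rcases h0.eq_or_lt with h | h
  · exact ⟨_, Or.inl ⟨rfl, h.symm⟩⟩
  · rcases h1.eq_or_lt with h' | h'
    · exact ⟨_, Or.inr (Or.inl ⟨rfl, h'⟩)⟩
    · exact ⟨_, Or.inr (Or.inr ⟨⟨h, h'⟩, rfl⟩)⟩

lemma no_special (h3 : Γ.ThreeEdgeConnected) (h : Setup Γ Dx Dy Gx Gy f S m M)
    (hD : LinEquiv Γ D Dx) {e : Γ.E} {s t : ℝ} (he : e ∈ Cr Γ S)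
    (g : Seg Γ Dx Dy f S m M e s t) (r : ℝ) (hr1 : s < r) (hr2 : r < t) (z : Γ.Pt)
    (hz : LiesOn Γ e z r) : ¬ SpecialPt Γ D z := by
  have hmid := g.mid r hr1 hr2
  have hvz : ∀ p v, ratEval f p = f.eFun e r → p ≠ Sum.inl v := by
    rintro p v hp rfl
    have hv : f.vVal v = f.eFun e r := hp
    rcases h.val v with k | k <;> linarith [hmid.1, hmid.2]
  rintro (⟨v, hv⟩ | ⟨x, Dz, hadm, hDz⟩)
  · exact hvz z v (ratEval_liesOn f hz) hv
  · obtain ⟨P, r', E, hP, hP', hDE, ⟨GE⟩, -⟩ := trunc_rep Gx Gy f h.hf S h.hC (f.eFun e r)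
      (fun v hv => by rw [h.hm v hv]; exact hmid.1)
      (fun v hv => by rw [h.hM v hv]; exact hmid.2.le) hD
    obtain ⟨Gz⟩ := good_of_admissible hadm
    obtain ⟨l1, l2, l3, -⟩ := hP e he
    have lb := liesOn_bounds l1
    have hrr := g.inj r (r' e) lb.1 lb.2 hr1 hr2 l2
    rw [hrr] at l1
    have hPz := liesOn_unique l1 hz
    rw [hPz] at l3
    have hne : E ≠ Dz := by
      intro heq
      obtain ⟨-, p, q, hpq, -⟩ := hadm
      have hx0 : E (Sum.inl x) ≠ 0 := by
        rw [heq, hpq]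
        have k1 : 0 ≤ unitDiv Γ p (Sum.inl x) := by simp only [unitDiv]; split_ifs <;> simp
        have k2 : 0 ≤ unitDiv Γ q (Sum.inl x) := by simp only [unitDiv]; split_ifs <;> simp
        have k3 : unitDiv Γ (Sum.inl x) (Sum.inl x) = 1 := by simp [unitDiv]
        simp only
        omega
      obtain ⟨e', he', hpe⟩ := hP' _ hx0
      refine hvz (P e') x ?_ hpe.symm
      rw [ratEval_liesOn f (hP e' he').1, (hP e' he').2.1]
    obtain ⟨f', hf'⟩ := linEquiv_trans (linEquiv_symm hDE) hadm.1
    exact hDz (disjoint_supp h3 GE Gz f' hf' hne z l3)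

lemma connSeg_of_seg (h3 : Γ.ThreeEdgeConnected) (h : Setup Γ Dx Dy Gx Gy f S m M)
    (hD : LinEquiv Γ D Dx) {e : Γ.E} {s t : ℝ} (he : e ∈ Cr Γ S)
    (g : Seg Γ Dx Dy f S m M e s t) : ConnSeg Γ D Dx Dy e s t := by
  have h0 := g.h0
  have h1 := g.h1
  have hst := g.hst
  obtain ⟨p, hp⟩ := exists_liesOn e h0 (by linarith)
  obtain ⟨q, hq⟩ := exists_liesOn e (r := t) (by linarith) h1
  refine ⟨hst, p, q, hp, hq, ?_, fun r a b z hz => no_special h3 h hD he g r a b z hz⟩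
  rcases g.dir with ⟨-, -, k1, k2, -⟩ | ⟨-, -, k1, k2, -⟩
  · exact Or.inl ⟨k1 p hp, k2 q hq⟩
  · exact Or.inr ⟨k1 p hp, k2 q hq⟩

lemma special_of_ne {x y : Γ.V} (hx : AdmissibleRep Γ D x Dx) (hy : AdmissibleRep Γ D y Dy)
    {p : Γ.Pt} (h : Dx p ≠ 0 ∨ Dy p ≠ 0) : SpecialPt Γ D p := by
  rcases h with h | h
  · exact Or.inr ⟨x, Dx, hx, h⟩
  · exact Or.inr ⟨y, Dy, hy, h⟩

lemma seg_unique (h : Setup Γ Dx Dy Gx Gy f S m M)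
    {x y : Γ.V} (hx : AdmissibleRep Γ D x Dx) (hy : AdmissibleRep Γ D y Dy)
    {e : Γ.E} {s t s' t' : ℝ}
    (g : Seg Γ Dx Dy f S m M e s t) (hc : ConnSeg Γ D Dx Dy e s' t') (hs0 : 0 ≤ s')
    (htL : t' ≤ Γ.len e) (hne : f.vVal (Γ.src e) ≠ f.vVal (Γ.tgt e))
    (hfs : f.eFun e s' = f.vVal (Γ.src e)) (hft : f.eFun e t' = f.vVal (Γ.tgt e)) :
    s = s' ∧ t = t' := by
  have hst' := hc.1
  obtain ⟨-, -, -, -, -, -, hns⟩ := hc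
  have g0 := g.h0
  have g1 := g.h1
  have gst := g.hst
  have a1 : s' ≤ s := by
    by_contra hcon
    push Not at hcon
    rcases lt_or_ge s' t with k | k
    · have := g.mid s' hcon k
      rw [hfs] at this
      rcases h.val (Γ.src e) with k' | k' <;> linarith [this.1, this.2]
    · have := g.hi s' k (by linarith)
      exact hne (hfs.symm.trans this)
  have a2 : t ≤ t' := by
    by_contra hcon
    push Not at hcon
    rcases lt_or_ge s t' with k | k
    · have := g.mid t' k hcon
      rw [hft] at this
      rcases h.val (Γ.tgt e) with k' | k' <;> linarith [this.1, this.2]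
    · have := g.lo t' (by linarith) k
      exact hne (this.symm.trans hft)
  constructor
  · by_contra hcon
    have hlt : s' < s := lt_of_le_of_ne a1 (Ne.symm hcon)
    obtain ⟨p, hp⟩ := exists_liesOn e g0 (by linarith : s ≤ Γ.len e)
    refine hns s hlt (by linarith) p hp (special_of_ne hx hy ?_)
    rcases g.dir with ⟨-, -, k1, k2, -⟩ | ⟨-, -, k1, k2, -⟩
    · exact Or.inl (k1 p hp)
    · exact Or.inr (k1 p hp)
  · by_contra hcon
    have hlt : t < t' := lt_of_le_of_ne a2 hcon
    obtain ⟨p, hp⟩ := exists_liesOn e (by linarith : 0 ≤ t) g1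
    refine hns t (by linarith) hlt p hp (special_of_ne hx hy ?_)
    rcases g.dir with ⟨-, -, k1, k2, -⟩ | ⟨-, -, k1, k2, -⟩
    · exact Or.inr (k2 p hp)
    · exact Or.inl (k2 p hp)

/-! ### Connectivity of complements -/

/-- Removed set associated with a set of edges. -/
def Rem (Γ : MetricGraphModel) (F : Finset Γ.E) (s t : Γ.E → ℝ) : Set Γ.Pt :=
  {z | ∃ e ∈ F, z ∈ segSet Γ e (s e) (t e)}

lemma not_mem_rem_inl {F : Finset Γ.E} {s t : Γ.E → ℝ} (h0 : ∀ e ∈ F, 0 ≤ s e)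
    (h1 : ∀ e ∈ F, t e ≤ Γ.len e) (v : Γ.V) : (Sum.inl v : Γ.Pt) ∉ Rem Γ F s t := by
  rintro ⟨e, he, r, hr1, hr2, hl⟩
  have := h0 e he
  have := h1 e he
  rcases hl with ⟨-, h⟩ | ⟨-, h⟩ | ⟨h, h'⟩
  · linarith
  · linarith
  · simp at h'

lemma mem_rem_inr {F : Finset Γ.E} {s t : Γ.E → ℝ} {e : Γ.E}
    {r : {t : ℝ // 0 < t ∧ t < Γ.len e}} :
    (Sum.inr ⟨e, r⟩ : Γ.Pt) ∈ Rem Γ F s t ↔ e ∈ F ∧ s e < r.1 ∧ r.1 < t e := by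
  constructor
  · rintro ⟨e', he', r', hr1, hr2, hl⟩
    rcases hl with ⟨h, -⟩ | ⟨h, -⟩ | ⟨h, h'⟩
    · simp at h
    · simp at h
    · simp only [Sum.inr.injEq, Sigma.mk.injEq] at h'
      obtain ⟨rfl, h'⟩ := h'
      rw [heq_eq_eq] at h'
      subst h'
      exact ⟨he', hr1, hr2⟩
  · rintro ⟨he, h1, h2⟩
    exact ⟨e, he, r.1, h1, h2, Or.inr (Or.inr ⟨r.2, rfl⟩)⟩

lemma mem_rem_liesOn {F : Finset Γ.E} {s t : Γ.E → ℝ} (h0 : ∀ e ∈ F, 0 ≤ s e)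
    (h1 : ∀ e ∈ F, t e ≤ Γ.len e) {e : Γ.E} {r : ℝ} {z : Γ.Pt} (hz : LiesOn Γ e z r) :
    z ∈ Rem Γ F s t ↔ e ∈ F ∧ s e < r ∧ r < t e := by
  constructor
  · intro h
    rcases hz with ⟨rfl, hr⟩ | ⟨rfl, hr⟩ | ⟨hr, rfl⟩
    · exact (not_mem_rem_inl h0 h1 _ h).elim
    · exact (not_mem_rem_inl h0 h1 _ h).elim
    · exact mem_rem_inr.1 h
  · rintro ⟨he, a, b⟩
    exact ⟨e, he, r, a, b, hz⟩

lemma rem_disconnected (h : Setup Γ Dx Dy Gx Gy f S m M) {s t : Γ.E → ℝ}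
    (g : ∀ e ∈ Cr Γ S, Seg Γ Dx Dy f S m M e (s e) (t e)) {u w : Γ.V} (hu : u ∈ S) (hw : w ∉ S) :
    ¬ ComplementConnected Γ (Rem Γ (Cr Γ S) s t) := by
  have h0 := fun e he => (g e he).h0
  have h1 := fun e he => (g e he).h1
  intro hcc
  have hpath := hcc (Sum.inl u) (Sum.inl w) (not_mem_rem_inl h0 h1 u) (not_mem_rem_inl h0 h1 w)
  have key : ∀ a b : Γ.Pt, a ∉ Rem Γ (Cr Γ S) s t → b ∉ Rem Γ (Cr Γ S) s t →
      ∀ e s1 t1, s1 ≤ t1 → LiesOn Γ e a s1 → LiesOn Γ e b t1 →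
      (∀ r, s1 < r → r < t1 → ∀ z, LiesOn Γ e z r → z ∉ Rem Γ (Cr Γ S) s t) →
      ratEval f a = ratEval f b := by
    intro a b ha hb e s1 t1 hst la lb hav
    rw [ratEval_liesOn f la, ratEval_liesOn f lb]
    have ba := liesOn_bounds la
    have bb := liesOn_bounds lb
    by_cases he : e ∈ Cr Γ S
    · have ge := g e he
      have gst := ge.hst
      have gh0 := ge.h0
      have gh1 := ge.h1
      rw [mem_rem_liesOn h0 h1 la] at ha
      rw [mem_rem_liesOn h0 h1 lb] at hb
      rcases le_or_gt s1 (s e) with k | k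
      · rcases le_or_gt t1 (s e) with k' | k'
        · rw [ge.lo s1 ba.1 k, ge.lo t1 bb.1 k']
        · have k2 : t e ≤ t1 := not_lt.1 fun hh => hb ⟨he, k', hh⟩
          exfalso
          obtain ⟨z, hz⟩ := exists_liesOn e (r := (s e + t e) / 2) (by linarith) (by linarith)
          exact hav _ (by linarith) (by linarith) z hz
            ((mem_rem_liesOn h0 h1 hz).2 ⟨he, by linarith, by linarith⟩)
      · have k2 : t e ≤ s1 := not_lt.1 fun hh => ha ⟨he, k, hh⟩
        rw [ge.hi s1 k2 ba.2, ge.hi t1 (k2.trans hst) bb.2]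
    · have hst' : f.eFun e 0 = f.eFun e (Γ.len e) := by
        rw [mem_Cr, not_not] at he
        rw [f.srcVal, f.tgtVal]
        by_cases hs : Γ.src e ∈ S
        · rw [h.hm _ hs, h.hm _ (he.1 hs)]
        · rw [h.hM _ hs, h.hM _ (fun ht => hs (he.2 ht))]
      have hcst := ((edgeForm Gx Gy f h.hf e).const hst').2.2.2
      rw [hcst s1 ba.1 ba.2, hcst t1 bb.1 bb.2]
  have hinv : ∀ b, Relation.ReflTransGen (fun a b => a ∉ Rem Γ (Cr Γ S) s t ∧
      b ∉ Rem Γ (Cr Γ S) s t ∧ AvoidAdj Γ (Rem Γ (Cr Γ S) s t) a b) (Sum.inl u) b →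
      ratEval f b = m := by
    intro b hb
    induction hb with
    | refl => exact h.hm u hu
    | tail _ hstep ih =>
      obtain ⟨ha, hb, e, s1, t1, hst, hl, hav⟩ := hstep
      rcases hl with ⟨l1, l2⟩ | ⟨l1, l2⟩
      · rw [← key _ _ ha hb e s1 t1 hst l1 l2 hav, ih]
      · rw [key _ _ hb ha e s1 t1 hst l1 l2 hav, ih]
  have h2 : f.vVal w = m := hinv _ hpath
  have := h.hM w hw
  linarith [h.hlt]

lemma avoid_symm {R : Set Γ.Pt} {p q : Γ.Pt}
    (h : p ∉ R ∧ q ∉ R ∧ AvoidAdj Γ R p q) : q ∉ R ∧ p ∉ R ∧ AvoidAdj Γ R q p := by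
  obtain ⟨h1, h2, e, s, t, h3, h4, h5⟩ := h
  exact ⟨h2, h1, e, s, t, h3, h4.symm, h5⟩

lemma rem_connected (h3 : Γ.ThreeEdgeConnected) {F : Finset Γ.E} (hF : F.card ≤ 2)
    {s t : Γ.E → ℝ} (h0 : ∀ e ∈ F, 0 ≤ s e) (h1 : ∀ e ∈ F, t e ≤ Γ.len e)  :
    ComplementConnected Γ (Rem Γ F s t) := by
  set R := Rem Γ F s t with hR
  have hsym : Std.Symm (Relation.ReflTransGen
      (fun a b => a ∉ R ∧ b ∉ R ∧ AvoidAdj Γ R a b)) :=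
    @Relation.ReflTransGen.stdSymm _ _ ⟨fun a b => avoid_symm⟩
  have hv : ∀ v, (Sum.inl v : Γ.Pt) ∉ R := not_mem_rem_inl h0 h1
  have hedge : ∀ e, e ∉ F → AvoidAdj Γ R (Sum.inl (Γ.src e)) (Sum.inl (Γ.tgt e)) := by
    intro e he
    refine ⟨e, 0, Γ.len e, (Γ.len_pos e).le, Or.inl ⟨Or.inl ⟨rfl, rfl⟩, Or.inr (Or.inl ⟨rfl, rfl⟩)⟩,
      fun r _ _ z hz hzR => he ((mem_rem_liesOn h0 h1 hz).1 hzR).1⟩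
  have hwalk : ∀ (L : List (Γ.E × Bool)) (u v : Γ.V), IsWalk Γ L u v → (∀ x ∈ L, x.1 ∉ F) →
      Relation.ReflTransGen (fun a b => a ∉ R ∧ b ∉ R ∧ AvoidAdj Γ R a b)
        (Sum.inl u) (Sum.inl v) := by
    intro L
    induction L with
    | nil => intro u v hw _; rw [show u = v from hw]
    | cons x xs ih =>
      intro u v hw hx
      obtain ⟨e1, e2⟩ := hw
      refine Relation.ReflTransGen.head ?_ (ih _ v e2 fun y hy => hx y (List.mem_cons_of_mem _ hy))
      have hxF := hedge x.1 (hx x (List.mem_cons_self ..))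
      rcases x with ⟨e, b⟩
      cases b
      · simp only [dSrc, dTgt, Bool.false_eq_true, if_false] at e1 ⊢
        rw [← e1]
        exact avoid_symm ⟨hv _, hv _, hxF⟩
      · simp only [dSrc, dTgt, if_true] at e1 ⊢
        rw [← e1]
        exact ⟨hv _, hv _, hxF⟩
  have hpt : ∀ p, p ∉ R → ∃ v, Relation.ReflTransGen
      (fun a b => a ∉ R ∧ b ∉ R ∧ AvoidAdj Γ R a b) p (Sum.inl v) := by
    intro p hp
    rcases p with v | ⟨e, r⟩
    · exact ⟨v, Relation.ReflTransGen.refl⟩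
    · have hp' := hp
      rw [hR, mem_rem_inr] at hp'
      have hl : LiesOn Γ e (Sum.inr ⟨e, r⟩) r.1 := Or.inr (Or.inr ⟨r.2, rfl⟩)
      by_cases hc : e ∈ F ∧ s e < r.1
      · refine ⟨Γ.tgt e, Relation.ReflTransGen.single ⟨hp, hv _, e, r.1, Γ.len e, r.2.2.le,
          Or.inl ⟨hl, Or.inr (Or.inl ⟨rfl, rfl⟩)⟩, fun r' a b z hz hzR => ?_⟩⟩
        have := (mem_rem_liesOn h0 h1 hz).1 hzR
        exact hp' ⟨hc.1, hc.2, a.trans this.2.2⟩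
      · refine ⟨Γ.src e, Relation.ReflTransGen.single ⟨hp, hv _, e, 0, r.1, r.2.1.le,
          Or.inr ⟨Or.inl ⟨rfl, rfl⟩, hl⟩, fun r' a b z hz hzR => ?_⟩⟩
        have := (mem_rem_liesOn h0 h1 hz).1 hzR
        exact hc ⟨this.1, this.2.1.trans b⟩
  intro p q hp hq
  obtain ⟨v, hv1⟩ := hpt p hp
  obtain ⟨w, hw1⟩ := hpt q hq
  obtain ⟨L, hL, hL'⟩ := h3 F hF v w
  exact (hv1.trans (hwalk L v w hL hL')).trans (hsym.symm _ _ hw1)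

/-! ### Counting -/

lemma seg_count (h : Setup Γ Dx Dy Gx Gy f S m M) {s t : Γ.E → ℝ}
    (g : ∀ e ∈ Cr Γ S, Seg Γ Dx Dy f S m M e (s e) (t e)) (z : Γ.Pt) (hz : Dx z ≠ 0) :
    ∑ e ∈ Cr Γ S, (if LiesOn Γ e z (s e) ∨ LiesOn Γ e z (t e) then (1 : ℤ) else 0) = Dx z := by
  rcases z with v | ⟨e, r⟩
  · have hv : v ∈ S := by
      by_contra hv
      exact hz (h.hC.x_out v hv)
    have h2 : ratDiv f (Sum.inl v) = ∑ e, vc Γ (f.eFun e) e v := rfl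
    rw [h.hf, h.hC.y_in v hv, zero_add, h2, ← Finset.sum_subset (Finset.subset_univ (Cr Γ S))]
    · refine Finset.sum_congr rfl fun e he => ?_
      have ge := g e he
      have gst := ge.hst
      have g0 := ge.h0
      have g1 := ge.h1
      simp only [vc, LiesOn, Sum.inl.injEq, reduceCtorEq, exists_false, or_false]
      rcases ge.dir with ⟨hs, ht, -, -, hsl, -⟩ | ⟨hs, ht, -, -, hsl, -⟩
      · have n1 : ¬ v = Γ.tgt e := fun hh => ne_out ht hv hh.symm
        have n2 : ¬ Γ.tgt e = v := ne_out ht hv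
        have n3 : ¬ t e = 0 := by intro hh; linarith
        simp only [n1, n2, n3, false_and, and_false, or_false, if_false, add_zero, hsl]
        by_cases hh : Γ.src e = v
        · simp [hh]
        · have hh' : ¬ v = Γ.src e := fun k => hh k.symm
          simp [hh, hh']
      · have n1 : ¬ v = Γ.src e := fun hh => ne_out hs hv hh.symm
        have n2 : ¬ Γ.src e = v := ne_out hs hv
        have n3 : ¬ s e = Γ.len e := by intro hh; linarith
        simp only [n1, n2, n3, false_and, and_false, false_or, if_false, zero_add, hsl]
        by_cases hh : Γ.tgt e = v
        · simp [hh]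
        · have hh' : ¬ v = Γ.tgt e := fun k => hh k.symm
          simp [hh, hh']
    · intro e _ he
      rw [mem_Cr, not_not] at he
      simp only [vc]
      by_cases hs : Γ.src e ∈ S
      · have hE := edgeForm Gx Gy f h.hf e
        have hcst := hE.const (by rw [f.srcVal, f.tgtVal, h.hm _ hs, h.hm _ (he.1 hs)])
        rw [hE.slope1, hcst.1, hcst.2.1]; simp
      · rw [if_neg (ne_out hs hv), if_neg (ne_out (fun ht => hs (he.2 ht)) hv)]; rfl
  · have hX := Gx.hint_ne hz
    have he : e ∈ Cr Γ S := by
      by_contra he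
      rw [mem_Cr, not_not] at he
      by_cases hs : Γ.src e ∈ S
      · have hE := edgeForm Gx Gy f h.hf e
        have hcst := hE.const (by rw [f.srcVal, f.tgtVal, h.hm _ hs, h.hm _ (he.1 hs)])
        have := h.hC.y_edge e hs (he.1 hs)
        omega
      · have := h.hC.x_edge e hs (fun ht => hs (he.2 ht))
        omega
    have hl : LiesOn Γ e (Sum.inr ⟨e, r⟩) r.1 := Or.inr (Or.inr ⟨r.2, rfl⟩)
    rw [Gx.hedg, if_pos hX, Finset.sum_eq_single e]
    · rw [if_pos]
      rcases (g e he).dir with ⟨-, -, -, -, -, k⟩ | ⟨-, -, -, -, -, k⟩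
      · left; rw [← k r hz]; exact hl
      · right; rw [← k r hz]; exact hl
    · intro e' _ hne
      rw [if_neg]
      have hi : interiorOf Γ e (Sum.inr ⟨e, r⟩) := ⟨r, rfl⟩
      rintro (k | k)
      · exact hne (liesOn_interior k hi).symm
      · exact hne (liesOn_interior k hi).symm
    · intro k; exact (k he).elim

end TriCut
end

/-- If `Dx` and `Dy` are consecutive admissible
representatives of `D ∈ W¹₃(Γ)` on a `3`-edge connected metric graph with more
than `3` vertices, then there are exactly three edges of the refinement `G_D`
joining `Supp Dx` and `Supp Dy`; they have the same length, they form a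
`3`-edge cut, and the number of them incident to a point `z` of `Supp Dx`
equals the multiplicity `Dx z`. -/
theorem consecutive_three_edge_cut
    (Γ : MetricGraphModel) (hcan : Γ.IsCanonical) (h3ec : Γ.ThreeEdgeConnected)
    (hcard : 3 < Fintype.card Γ.V)
    (D : MetricGraphModel.Divisor Γ) (hfin : MetricGraphModel.DivFinSupp D)
    (hdeg : MetricGraphModel.divDegree D = 3) (hrk : MetricGraphModel.RankGE Γ D 1)
    (x y : Γ.V) (Dx Dy : MetricGraphModel.Divisor Γ)
    (hx : AdmissibleRep Γ D x Dx) (hy : AdmissibleRep Γ D y Dy)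
    (hcons : Consecutive Γ D Dx Dy) :
    ∃ σ : Fin 3 → Γ.E × ℝ × ℝ, Function.Injective σ ∧
      (∀ i, ConnSeg Γ D Dx Dy (σ i).1 (σ i).2.1 (σ i).2.2) ∧
      (∀ e s t, ConnSeg Γ D Dx Dy e s t → ∃ i, σ i = (e, s, t)) ∧
      (∀ i j, (σ i).2.2 - (σ i).2.1 = (σ j).2.2 - (σ j).2.1) ∧
      ¬ ComplementConnected Γ (⋃ i : Fin 3, segSet Γ (σ i).1 (σ i).2.1 (σ i).2.2) ∧
      (∀ J : Finset (Fin 3), J ≠ Finset.univ →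
        ComplementConnected Γ (⋃ i ∈ J, segSet Γ (σ i).1 (σ i).2.1 (σ i).2.2)) ∧
      (∀ z : Γ.Pt, Dx z ≠ 0 →
        ((Finset.univ.filter fun i : Fin 3 =>
            LiesOn Γ (σ i).1 z (σ i).2.1 ∨ LiesOn Γ (σ i).1 z (σ i).2.2).card : ℤ)
          = Dx z) := by
  classical
  obtain ⟨Gx⟩ := TriCut.good_of_admissible hx
  obtain ⟨Gy⟩ := TriCut.good_of_admissible hy
  obtain ⟨f, hf⟩ := TriCut.linEquiv_trans (TriCut.linEquiv_symm hx.1) hy.1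
  obtain ⟨hne, e0, s0, t0, hc0⟩ := hcons
  obtain ⟨u, w, hu, hw, huw⟩ := TriCut.exists_min Gx Gy f hf hne
  obtain ⟨S, hS⟩ : ∃ S : Finset Γ.V, ∀ v, v ∈ S ↔ f.vVal v = f.vVal u :=
    ⟨Finset.univ.filter fun v => f.vVal v = f.vVal u, by simp⟩
  have huS : u ∈ S := (hS u).2 rfl
  have hwS : w ∉ S := fun h => huw.ne' ((hS w).1 h)
  have hC := TriCut.cut_lemma h3ec Gx Gy f hf S huS hwS (fun a b ha hb => by
    rw [hS] at ha hb
    rw [ha]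
    exact lt_of_le_of_ne (hu b) (Ne.symm hb))
  have hset : TriCut.Setup Γ Dx Dy Gx Gy f S (f.vVal u) (f.vVal w) :=
    { hf := hf
      hm := fun v hv => (hS v).1 hv
      hM := fun v hv => (TriCut.two_levels h3ec Gx Gy f hf hu hw huw hx.1 hc0 v).resolve_left
        (fun h => hv ((hS v).2 h))
      hlt := huw
      hC := hC }
  have hseg : ∀ e, ∃ s t, e ∈ TriCut.Cr Γ S →
      TriCut.Seg Γ Dx Dy f S (f.vVal u) (f.vVal w) e s t := by
    intro e
    by_cases he : e ∈ TriCut.Cr Γ S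
    · obtain ⟨s, t, h⟩ := hset.seg e he
      exact ⟨s, t, fun _ => h⟩
    · exact ⟨0, 0, fun h => (he h).elim⟩
  choose s t hst using hseg
  let g : Fin 3 ≃ TriCut.Cr Γ S := (Finset.equivFinOfCardEq hC.card).symm
  refine ⟨fun i => ((g i).1, s (g i).1, t (g i).1), ?_, ?_, ?_, ?_, ?_, ?_, ?_⟩
  · intro i j hij
    exact g.injective (Subtype.ext (Prod.ext_iff.1 hij).1)
  · intro i
    exact TriCut.connSeg_of_seg h3ec hset hx.1 (g i).2 (hst _ (g i).2)
  · intro e s' t' hc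
    obtain ⟨h0, h1, hl⟩ := TriCut.seg_levels h3ec Gx Gy f hf hu hw huw hc
    have hfs : f.eFun e s' = f.vVal (Γ.src e) := by
      rcases hl with ⟨a, b, c, d⟩ | ⟨a, b, c, d⟩
      · rw [c, a]
      · rw [c, a]
    have hft : f.eFun e t' = f.vVal (Γ.tgt e) := by
      rcases hl with ⟨a, b, c, d⟩ | ⟨a, b, c, d⟩
      · rw [d, b]
      · rw [d, b]
    have hne' : f.vVal (Γ.src e) ≠ f.vVal (Γ.tgt e) := by
      rcases hl with ⟨a, b, c, d⟩ | ⟨a, b, c, d⟩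
      · rw [a, b]; exact huw.ne
      · rw [a, b]; exact huw.ne'
    have he : e ∈ TriCut.Cr Γ S := by
      rw [TriCut.mem_Cr, hS, hS]
      rcases hl with ⟨a, b, c, d⟩ | ⟨a, b, c, d⟩
      · rw [a, b]; simp [huw.ne']
      · rw [a, b]; simp [huw.ne']
    obtain ⟨q1, q2⟩ := TriCut.seg_unique hset hx hy (hst e he) hc h0 h1 hne' hfs hft
    refine ⟨g.symm ⟨e, he⟩, ?_⟩
    simp [q1, q2]
  · intro i j
    exact (hst _ (g i).2).hlen.trans (hst _ (g j).2).hlen.symm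
  · have hR : (⋃ i : Fin 3, segSet Γ (g i).1 (s (g i).1) (t (g i).1)) =
        TriCut.Rem Γ (TriCut.Cr Γ S) s t := by
      ext z
      simp only [Set.mem_iUnion, TriCut.Rem, Set.mem_setOf_eq]
      constructor
      · rintro ⟨i, hi⟩
        exact ⟨_, (g i).2, hi⟩
      · rintro ⟨e, he, hz⟩
        exact ⟨g.symm ⟨e, he⟩, by simpa using hz⟩
    simp only
    rw [hR]
    exact TriCut.rem_disconnected hset (fun e he => hst e he) huS hwS
  · intro J hJ
    have hR : (⋃ i ∈ J, segSet Γ (g i).1 (s (g i).1) (t (g i).1)) =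
        TriCut.Rem Γ (J.image fun i => (g i).1) s t := by
      ext z
      simp only [Set.mem_iUnion, TriCut.Rem, Set.mem_setOf_eq, Finset.mem_image]
      constructor
      · rintro ⟨i, hi, hz⟩
        exact ⟨_, ⟨i, hi, rfl⟩, hz⟩
      · rintro ⟨e, ⟨i, hi, rfl⟩, hz⟩
        exact ⟨i, hi, hz⟩
    have hJ3 : J.card < 3 := by
      have := Finset.card_lt_univ_of_notMem (s := J)
        (Classical.not_forall.1 fun h => hJ (Finset.eq_univ_iff_forall.2 h)).choose_spec
      simpa using this
    have hin : ∀ e ∈ J.image (fun i => (g i).1), e ∈ TriCut.Cr Γ S := by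
      intro e he
      obtain ⟨i, -, rfl⟩ := Finset.mem_image.1 he
      exact (g i).2
    simp only
    rw [hR]
    exact TriCut.rem_connected h3ec
      ((Finset.card_image_le).trans (Nat.lt_succ_iff.1 hJ3))
      (fun e he => (hst e (hin e he)).h0) (fun e he => (hst e (hin e he)).h1)
  · intro z hz
    rw [← TriCut.seg_count hset (fun e he => hst e he) z hz, Finset.card_filter, Nat.cast_sum,
      ← Finset.sum_coe_sort (TriCut.Cr Γ S)]
    refine Fintype.sum_equiv g _ _ fun i => ?_
    push_cast
    congr
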